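/- arXiv:1810.08467 — 7 statements merged into one kernel-verified Lean document; each statement's English description precedes it below -/
import Mathlib

section
/- Hopf lemma for graphical mean curvature flow: let δ > 0 and let u and v be graphical solutions of the mean curvature flow in P(0,δ) ∩ {x₁ ≤ 0}, i.e. smooth functions on {(x,t) : |x| < δ, x₁ ≤ 0, −δ² < t ≤ 0} satisfying the graphical mean curvature flow equation there. Suppose that u(0,0) = v(0,0) and that u(x,t) < v(x,t) at every point of P(0,δ) with x₁ < 0. Then ∂u/∂x₁(0,0) > ∂v/∂x₁(0,0). -/
noncomputable section

/-- Partial derivative in the first spatial variable. -/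
def pd1 (f : ℝ → ℝ → ℝ → ℝ) (x₁ x₂ t : ℝ) : ℝ := deriv (fun s => f s x₂ t) x₁

/-- Partial derivative in the second spatial variable. -/
def pd2 (f : ℝ → ℝ → ℝ → ℝ) (x₁ x₂ t : ℝ) : ℝ := deriv (fun s => f x₁ s t) x₂

/-- Partial derivative in time. -/
def pdt (f : ℝ → ℝ → ℝ → ℝ) (x₁ x₂ t : ℝ) : ℝ := deriv (fun s => f x₁ x₂ s) t

/-- Second partial derivative `∂₁∂₁`. -/
def pd11 (f : ℝ → ℝ → ℝ → ℝ) (x₁ x₂ t : ℝ) : ℝ := deriv (fun s => pd1 f s x₂ t) x₁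

/-- Second partial derivative `∂₂∂₁`. -/
def pd12 (f : ℝ → ℝ → ℝ → ℝ) (x₁ x₂ t : ℝ) : ℝ := deriv (fun s => pd1 f x₁ s t) x₂

/-- Second partial derivative `∂₁∂₂`. -/
def pd21 (f : ℝ → ℝ → ℝ → ℝ) (x₁ x₂ t : ℝ) : ℝ := deriv (fun s => pd2 f s x₂ t) x₁

/-- Second partial derivative `∂₂∂₂`. -/
def pd22 (f : ℝ → ℝ → ℝ → ℝ) (x₁ x₂ t : ℝ) : ℝ := deriv (fun s => pd2 f x₁ s t) x₂

/-- `1 + |Du|²`. -/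
def gradQ (f : ℝ → ℝ → ℝ → ℝ) (x₁ x₂ t : ℝ) : ℝ :=
  1 + (pd1 f x₁ x₂ t) ^ 2 + (pd2 f x₁ x₂ t) ^ 2

/-- The parabolic ball `P(0,δ) = {(x,t) : |x| < δ, -δ² < t ≤ 0}` in `ℝ² × ℝ`,
with points recorded as triples `(x₁, x₂, t)`. -/
def pball (δ : ℝ) : Set (ℝ × ℝ × ℝ) :=
  {p | p.1 ^ 2 + p.2.1 ^ 2 < δ ^ 2 ∧ -δ ^ 2 < p.2.2 ∧ p.2.2 ≤ 0}

/-- `f` is a (smooth) graphical solution of the mean curvature flow on the space-time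
set `S`: it is smooth, and on `S` it satisfies the nondivergence-form graphical mean
curvature flow equation
`∂ₜ f = Σᵢⱼ (δᵢⱼ - ∂ᵢf ∂ⱼf / (1+|Df|²)) ∂ᵢ∂ⱼ f`. -/
def IsGraphicalMCF (S : Set (ℝ × ℝ × ℝ)) (f : ℝ → ℝ → ℝ → ℝ) : Prop :=
  ContDiff ℝ (⊤ : ℕ∞) (fun p : ℝ × ℝ × ℝ => f p.1 p.2.1 p.2.2) ∧
  ∀ p ∈ S,
    pdt f p.1 p.2.1 p.2.2 =
      (1 - (pd1 f p.1 p.2.1 p.2.2) ^ 2 / gradQ f p.1 p.2.1 p.2.2) * pd11 f p.1 p.2.1 p.2.2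
      + (0 - pd1 f p.1 p.2.1 p.2.2 * pd2 f p.1 p.2.1 p.2.2 / gradQ f p.1 p.2.1 p.2.2)
          * pd12 f p.1 p.2.1 p.2.2
      + (0 - pd2 f p.1 p.2.1 p.2.2 * pd1 f p.1 p.2.1 p.2.2 / gradQ f p.1 p.2.1 p.2.2)
          * pd21 f p.1 p.2.1 p.2.2
      + (1 - (pd2 f p.1 p.2.1 p.2.2) ^ 2 / gradQ f p.1 p.2.1 p.2.2) * pd22 f p.1 p.2.1 p.2.2

/-- The pointwise difference of two graph functions. -/
def fsub (u v : ℝ → ℝ → ℝ → ℝ) : ℝ → ℝ → ℝ → ℝ := fun a b c => u a b c - v a b c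

/-!
The difference `w = v - u` satisfies a linear parabolic inequality `L w ≤ 0` with continuous
coefficients, so the nonlinear statement follows from the linear Hopf lemma. In cleared form the
principal part of the mean curvature operator is `e₁ ⊗ e₁ + e₂ ⊗ e₂ + ξ ⊗ ξ` with
`ξ = (∂₂v, -∂₁v)`; as a sum of squares it is visibly nonnegative at a spatial minimum, and as a
polynomial in the gradient it has explicit difference quotients, which become the drift of `L`.

For the linear lemma, the barrier `φ = -x₁ + K x₁² - |y|² + t` satisfies `L φ > 0` at the origin
for large `K`, hence nearby by continuity. On a small cylinder
`{-r ≤ x₁ ≤ 0, |y| ≤ ρ, -ρ² ≤ t ≤ 0}` with `r + K r² ≤ ρ²`, the barrier is positive on the parabolic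
boundary only where `x₁ = -r`, and there `w` has a positive lower bound. So `w ≥ ε φ` on the
cylinder for some `ε > 0` by the minimum principle, with equality at the origin, and therefore
`∂₁w ≤ ε ∂₁φ = -ε` there.
-/

open Filter Set Metric
open scoped Topology

section LineRestriction

variable {X E : Type*} [NormedAddCommGroup X] [NormedSpace ℝ X] [NormedAddCommGroup E]
  [NormedSpace ℝ E] {f : X → E} {p v : X}

lemma hasDerivAt_comp_add_smul {s : ℝ} (hf : DifferentiableAt ℝ f (p + s • v)) :
    HasDerivAt (fun s : ℝ => f (p + s • v)) (fderiv ℝ f (p + s • v) v) s := by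
  have hline : HasDerivAt (fun s : ℝ => p + s • v) v s := by
    simpa using ((hasDerivAt_id s).smul_const v).const_add p
  exact hf.hasFDerivAt.comp_hasDerivAt s hline

lemma tendsto_add_smul_nhds_zero (p v : X) :
    Tendsto (fun s : ℝ => p + s • v) (𝓝 0) (𝓝 p) := by
  have hcont : ContinuousAt (fun s : ℝ => p + s • v) 0 := by fun_prop
  simpa [ContinuousAt] using hcont

lemma differentiableAt_fderiv_of_contDiffAt (hf : ContDiffAt ℝ 2 f p) :
    DifferentiableAt ℝ (fderiv ℝ f) p :=
  (hf.fderiv_right (m := 1) (by norm_num)).differentiableAt one_ne_zero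

lemma deriv_deriv_comp_add_smul (hf : ContDiffAt ℝ 2 f p) (v : X) :
    deriv (deriv fun s : ℝ => f (p + s • v)) 0 = fderiv ℝ (fderiv ℝ f) p v v := by
  have hfirst : deriv (fun s : ℝ => f (p + s • v)) =ᶠ[𝓝 0] fun s => fderiv ℝ f (p + s • v) v := by
    filter_upwards [(tendsto_add_smul_nhds_zero p v).eventually (hf.eventually (by simp))]
      with s hs
    exact (hasDerivAt_comp_add_smul (hs.differentiableAt two_ne_zero)).deriv
  have hsecond : HasDerivAt (fun s : ℝ => fderiv ℝ f (p + s • v) v)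
      (fderiv ℝ (fderiv ℝ f) p v v) 0 := by
    have hline : HasLineDerivAt ℝ (fderiv ℝ f) (fderiv ℝ (fderiv ℝ f) p v) p v :=
      (differentiableAt_fderiv_of_contDiffAt hf).hasFDerivAt.hasLineDerivAt v
    simpa using HasDerivAt.clm_apply hline (hasDerivAt_const 0 v)
  rw [hfirst.deriv_eq, hsecond.deriv]

end LineRestriction

section DiffusionOperator

variable {ι X : Type*} [Fintype ι] [NormedAddCommGroup X] [NormedSpace ℝ X]
  {f g : X → ℝ} {p v : X} {ξ : ι → X → X} {b : X → X}

lemma deriv_deriv_nonneg_of_isLocalMin {g : ℝ → ℝ} {a : ℝ} (h : IsLocalMin g a)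
    (hc : ContinuousAt g a) : 0 ≤ deriv (deriv g) a := by
  by_contra! hneg
  have hmax := isLocalMax_of_deriv_deriv_neg hneg h.deriv_eq_zero hc
  have hconst : g =ᶠ[𝓝 a] fun _ => g a := by
    filter_upwards [h, hmax] with x h₁ h₂ using le_antisymm h₂ h₁
  have hzero : deriv (deriv g) a = 0 := by simp [hconst.deriv.deriv_eq]
  exact hneg.ne hzero

lemma fderiv_apply_nonneg_of_isMinOn {S : Set X} (hf : DifferentiableAt ℝ f p)
    (hmin : IsMinOn f S p) (hv : ∀ᶠ s : ℝ in 𝓝[>] 0, p + s • v ∈ S) : 0 ≤ fderiv ℝ f p v :=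
  hmin.localize.hasFDerivWithinAt_nonneg hf.hasFDerivAt.hasFDerivWithinAt
    (mem_posTangentConeAt_of_frequently_mem hv.frequently)

lemma fderiv_fderiv_apply_nonneg_of_isMinOn {S : Set X} (hf : ContDiffAt ℝ 2 f p)
    (hmin : IsMinOn f S p) (hv : ∀ᶠ s : ℝ in 𝓝 0, p + s • v ∈ S) :
    0 ≤ fderiv ℝ (fderiv ℝ f) p v v := by
  have hline : IsLocalMin (fun s : ℝ => f (p + s • v)) 0 := by
    filter_upwards [hv] with s hs
    simpa using hmin hs
  have hcont : ContinuousAt (fun s : ℝ => f (p + s • v)) 0 :=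
    ContinuousAt.comp (by simpa using hf.continuousAt) (by fun_prop)
  exact deriv_deriv_comp_add_smul hf v ▸ deriv_deriv_nonneg_of_isLocalMin hline hcont

/-- The linear second-order operator `f ↦ ∑ₖ D²f(ξₖ, ξₖ) + Df(b)`. Writing the principal part as a
sum of squares encodes its nonnegativity. A parabolic operator on space-time is the case where the
`ξₖ` are spatial and the drift `b` points into the past. -/
def diffusionOp (ξ : ι → X → X) (b : X → X) (f : X → ℝ) (p : X) : ℝ :=
  ∑ k, fderiv ℝ (fderiv ℝ f) p (ξ k p) (ξ k p) + fderiv ℝ f p (b p)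

lemma diffusionOp_sub (hf : ContDiffAt ℝ 2 f p) (hg : ContDiffAt ℝ 2 g p) :
    diffusionOp ξ b (f - g) p = diffusionOp ξ b f p - diffusionOp ξ b g p := by
  have hfirst : fderiv ℝ (f - g) =ᶠ[𝓝 p] fderiv ℝ f - fderiv ℝ g := by
    filter_upwards [hf.eventually (by simp), hg.eventually (by simp)] with q hfq hgq
    exact fderiv_sub (hfq.differentiableAt two_ne_zero) (hgq.differentiableAt two_ne_zero)
  have hsecond : fderiv ℝ (fderiv ℝ (f - g)) p
      = fderiv ℝ (fderiv ℝ f) p - fderiv ℝ (fderiv ℝ g) p :=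
    hfirst.fderiv_eq.trans (fderiv_sub (differentiableAt_fderiv_of_contDiffAt hf)
      (differentiableAt_fderiv_of_contDiffAt hg))
  simp only [diffusionOp, hsecond, hfirst.eq_of_nhds, Pi.sub_apply, sub_apply,
    Finset.sum_sub_distrib]
  ring

lemma diffusionOp_const_smul (c : ℝ) (f : X → ℝ) (p : X) :
    diffusionOp ξ b (c • f) p = c * diffusionOp ξ b f p := by
  have hsecond : fderiv ℝ (c • fderiv ℝ f) p = c • fderiv ℝ (fderiv ℝ f) p :=
    congrFun (fderiv_const_smul_field (f := fderiv ℝ f) c) p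
  simp only [diffusionOp, fderiv_const_smul_field, hsecond, Pi.smul_apply, smul_apply, smul_eq_mul,
    mul_add, Finset.mul_sum]

lemma continuousAt_diffusionOp (hξ : ∀ k, ContinuousAt (ξ k) p) (hb : ContinuousAt b p)
    (hf : ContDiffAt ℝ 2 f p) : ContinuousAt (diffusionOp ξ b f) p := by
  have hD : ContDiffAt ℝ 1 (fderiv ℝ f) p := hf.fderiv_right (by norm_num)
  have hD₂ : ContinuousAt (fderiv ℝ (fderiv ℝ f)) p :=
    (hD.fderiv_right (m := 0) (by norm_num)).continuousAt
  exact (tendsto_finsetSum _ fun k _ => (hD₂.clm_apply (hξ k)).clm_apply (hξ k)).add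
    (hD.continuousAt.clm_apply hb)

lemma diffusionOp_nonneg_of_isMinOn {S : Set X} (hf : ContDiffAt ℝ 2 f p) (hmin : IsMinOn f S p)
    (hξ : ∀ k, ∀ᶠ s : ℝ in 𝓝 0, p + s • ξ k p ∈ S)
    (hb : ∀ᶠ s : ℝ in 𝓝[>] 0, p + s • b p ∈ S) : 0 ≤ diffusionOp ξ b f p :=
  add_nonneg
    (Finset.sum_nonneg fun k _ => fderiv_fderiv_apply_nonneg_of_isMinOn hf hmin (hξ k))
    (fderiv_apply_nonneg_of_isMinOn (hf.differentiableAt two_ne_zero) hmin hb)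

end DiffusionOperator

lemma exists_pos_mul_le_of_isCompact {X : Type*} [TopologicalSpace X] {C : Set X} {f g : X → ℝ}
    (hC : IsCompact C) (hf : ContinuousOn f C) (hg : ContinuousOn g C) (hpos : ∀ x ∈ C, 0 < g x) :
    ∃ ε > 0, ∀ x ∈ C, ε * f x ≤ g x := by
  obtain ⟨M, hM⟩ := hC.exists_bound_of_continuousOn (hf.div hg fun x hx => (hpos x hx).ne')
  have hM₁ : 0 < max M 1 := by positivity
  refine ⟨(max M 1)⁻¹, by positivity, fun x hx => ?_⟩
  have hratio : f x / g x ≤ max M 1 := (le_abs_self _).trans ((hM x hx).trans (le_max_left _ _))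
  rw [inv_mul_le_iff₀ hM₁]
  exact (div_le_iff₀ (hpos x hx)).1 hratio

section LinearHopf

variable {F : Type*} [NormedAddCommGroup F]

/-- The past half-space `{x₁ < 0, t ≤ 0}` in a space-time whose points `(x₁, y, t)` record the
normal coordinate, the tangential coordinates and time. -/
def pastHalfSpace (F : Type*) : Set (ℝ × F × ℝ) := {p | p.1 < 0 ∧ p.2.2 ≤ 0}

/-- The closed cylinder `{-r ≤ x₁ ≤ 0, |y| ≤ ρ, -ρ² ≤ t ≤ 0}` on which the barrier is compared with
the solution. -/
def hopfCylinder (F : Type*) [NormedAddCommGroup F] (r ρ : ℝ) : Set (ℝ × F × ℝ) :=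
  Icc (-r) 0 ×ˢ closedBall 0 ρ ×ˢ Icc (-ρ ^ 2) 0

/-- The barrier `-x₁ + K x₁² - |y|² + t` of the Hopf lemma. -/
def hopfBarrier (K : ℝ) (p : ℝ × F × ℝ) : ℝ := -p.1 + K * p.1 ^ 2 - ‖p.2.1‖ ^ 2 + p.2.2

variable {K r ρ ε : ℝ} {p : ℝ × F × ℝ} {w : ℝ × F × ℝ → ℝ}

lemma isCompact_hopfCylinder [ProperSpace F] : IsCompact (hopfCylinder F r ρ) :=
  isCompact_Icc.prod ((isCompact_closedBall 0 ρ).prod isCompact_Icc)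

lemma zero_mem_hopfCylinder (hr : 0 ≤ r) (hρ : 0 ≤ ρ) : (0 : ℝ × F × ℝ) ∈ hopfCylinder F r ρ :=
  ⟨⟨neg_nonpos.2 hr, le_rfl⟩, mem_closedBall_self hρ, neg_nonpos.2 (sq_nonneg ρ), le_rfl⟩

lemma exists_hopfCylinder_subset (K : ℝ) {U : Set (ℝ × F × ℝ)} (hU : U ∈ 𝓝 0) :
    ∃ r > 0, ∃ ρ > 0, r + K * r ^ 2 ≤ ρ ^ 2 ∧ hopfCylinder F r ρ ⊆ U := by
  obtain ⟨δ, hδ, hball⟩ := Metric.nhds_basis_closedBall.mem_iff.1 hU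
  have hρ : 0 < min δ 1 := by positivity
  have hsmall : ∀ᶠ r in 𝓝[>] (0 : ℝ), r + K * r ^ 2 < min δ 1 ^ 2 ∧ r < min δ 1 := by
    have hlim : Tendsto (fun r : ℝ => r + K * r ^ 2) (𝓝 0) (𝓝 0) := by
      have hcont : ContinuousAt (fun r : ℝ => r + K * r ^ 2) 0 := by fun_prop
      simpa [ContinuousAt] using hcont
    exact nhdsWithin_le_nhds
      ((hlim.eventually_lt_const (by positivity)).and (eventually_lt_nhds hρ))
  obtain ⟨r, ⟨hrK, hrρ⟩, hr⟩ := (hsmall.and self_mem_nhdsWithin).exists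
  refine ⟨r, hr, min δ 1, hρ, hrK.le, fun p ⟨hx, hy, ht⟩ => hball ?_⟩
  have hρδ : min δ 1 ≤ δ := min_le_left _ _
  have hρ₁ : min δ 1 ^ 2 ≤ min δ 1 := pow_le_of_le_one hρ.le (min_le_right _ _) two_ne_zero
  rw [mem_closedBall_zero_iff, norm_prod_le_iff, norm_prod_le_iff, Real.norm_eq_abs,
    Real.norm_eq_abs, abs_le, abs_le]
  rw [mem_closedBall_zero_iff] at hy
  exact ⟨⟨by linarith [hx.1], by linarith [hx.2]⟩, hy.trans hρδ, by linarith [ht.1],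
    by linarith [ht.2]⟩

lemma eventually_add_smul_mem_hopfCylinder [NormedSpace ℝ F]
    (hp : p ∈ Ioo (-r) 0 ×ˢ ball (0 : F) ρ ×ˢ Ioc (-ρ ^ 2) 0) (v : ℝ × F × ℝ) :
    ∀ᶠ s : ℝ in 𝓝 0, s * v.2.2 ≤ 0 → p + s • v ∈ hopfCylinder F r ρ := by
  have hnhds : Ioo (-r) 0 ×ˢ ball (0 : F) ρ ×ˢ Ioi (-ρ ^ 2) ∈ 𝓝 p :=
    (isOpen_Ioo.prod (isOpen_ball.prod isOpen_Ioi)).mem_nhds ⟨hp.1, hp.2.1, hp.2.2.1⟩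
  filter_upwards [tendsto_add_smul_nhds_zero p v hnhds] with s hs hpast
  exact ⟨Ioo_subset_Icc_self hs.1, ball_subset_closedBall hs.2.1, hs.2.2.le,
    add_nonpos hp.2.2.2 hpast⟩

lemma hopfBarrier_zero : hopfBarrier K (0 : ℝ × F × ℝ) = 0 := by simp [hopfBarrier]

lemma mem_of_hopfBarrier_pos (hK : 0 ≤ K) (hrρ : r + K * r ^ 2 ≤ ρ ^ 2) (hρ : 0 ≤ ρ)
    (hp : p ∈ hopfCylinder F r ρ) (hpos : 0 < hopfBarrier K p) :
    p ∈ Ico (-r) 0 ×ˢ ball (0 : F) ρ ×ˢ Ioc (-ρ ^ 2) 0 := by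
  obtain ⟨hx, -, ht⟩ := hp
  have hbound : -p.1 + K * p.1 ^ 2 ≤ ρ ^ 2 := by
    have hsq : p.1 ^ 2 ≤ r ^ 2 := sq_le_sq' hx.1 (by linarith [hx.1, hx.2])
    linarith [mul_le_mul_of_nonneg_left hsq hK, hx.1]
  rw [hopfBarrier] at hpos
  refine ⟨⟨hx.1, hx.2.lt_of_ne fun h => ?_⟩, ?_, ?_, ht.2⟩
  · rw [h] at hpos
    linarith [sq_nonneg ‖p.2.1‖, ht.2]
  · rw [mem_ball_zero_iff]
    exact lt_of_pow_lt_pow_left₀ 2 hρ (by linarith [ht.2])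
  · linarith [sq_nonneg ‖p.2.1‖]

lemma nonneg_on_hopfCylinder (hw : ∀ p ∈ hopfCylinder F r ρ, ContinuousAt w p)
    (hr : 0 < r) (hpos : ∀ p ∈ hopfCylinder F r ρ ∩ pastHalfSpace F, 0 < w p)
    (hp : p ∈ hopfCylinder F r ρ) : 0 ≤ w p := by
  rcases hp.1.2.lt_or_eq with hx | hx
  · exact (hpos p ⟨hp, hx, hp.2.2.2⟩).le
  have hlim : Tendsto (fun x => w (x, p.2)) (𝓝[<] 0) (𝓝 (w p)) := by
    have hslice : Tendsto (fun x => (x, p.2)) (𝓝[<] 0) (𝓝 p) :=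
      ((Continuous.prodMk_left p.2).tendsto' 0 p (Prod.ext hx.symm rfl)).mono_left
        nhdsWithin_le_nhds
    exact (hw p hp).tendsto.comp hslice
  refine ge_of_tendsto hlim ?_
  filter_upwards [Ioo_mem_nhdsLT (neg_lt_zero.2 hr)] with x hx
  exact (hpos (x, p.2) ⟨⟨Ioo_subset_Icc_self hx, hp.2⟩, hx.2, hp.2.2.2⟩).le

variable [InnerProductSpace ℝ F]

lemma contDiff_hopfBarrier {n : WithTop ℕ∞} :
    ContDiff ℝ n (hopfBarrier K : ℝ × F × ℝ → ℝ) := by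
  have hnorm : ContDiff ℝ n fun p : ℝ × F × ℝ => ‖p.2.1‖ ^ 2 :=
    (contDiff_fst.comp contDiff_snd).norm_sq ℝ
  unfold hopfBarrier
  fun_prop

lemma hopfBarrier_smul (s : ℝ) (v : ℝ × F × ℝ) :
    hopfBarrier K (s • v) = (v.2.2 - v.1) * s + (K * v.1 ^ 2 - ‖v.2.1‖ ^ 2) * s ^ 2 := by
  simp only [hopfBarrier, Prod.smul_fst, Prod.smul_snd, smul_eq_mul, norm_smul, mul_pow,
    Real.norm_eq_abs, sq_abs]
  ring

lemma deriv_hopfBarrier_smul (v : ℝ × F × ℝ) :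
    deriv (fun s : ℝ => hopfBarrier K (0 + s • v)) =
      fun s => (v.2.2 - v.1) + (K * v.1 ^ 2 - ‖v.2.1‖ ^ 2) * (2 * s) := by
  funext s
  simp only [zero_add, hopfBarrier_smul]
  have hsq : HasDerivAt (fun s : ℝ => s ^ 2) (2 * s) s := by simpa using hasDerivAt_pow 2 s
  simpa using (((hasDerivAt_id s).const_mul (v.2.2 - v.1)).fun_add
    (hsq.const_mul (K * v.1 ^ 2 - ‖v.2.1‖ ^ 2))).deriv

lemma fderiv_hopfBarrier_zero (v : ℝ × F × ℝ) :
    fderiv ℝ (hopfBarrier K) 0 v = v.2.2 - v.1 := by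
  have hline : HasDerivAt (fun s : ℝ => hopfBarrier K (0 + s • v)) _ 0 :=
    hasDerivAt_comp_add_smul ((contDiff_hopfBarrier (n := 1)).differentiable one_ne_zero _)
  have hderiv := hline.deriv
  rw [deriv_hopfBarrier_smul] at hderiv
  simpa using hderiv.symm

lemma fderiv_fderiv_hopfBarrier_zero (v : ℝ × F × ℝ) :
    fderiv ℝ (fderiv ℝ (hopfBarrier K)) 0 v v = 2 * (K * v.1 ^ 2 - ‖v.2.1‖ ^ 2) := by
  rw [← deriv_deriv_comp_add_smul contDiff_hopfBarrier.contDiffAt, deriv_hopfBarrier_smul]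
  have hlin : HasDerivAt (fun s : ℝ => 2 * s) 2 0 := by
    simpa using (hasDerivAt_id (0 : ℝ)).const_mul 2
  rw [((hlin.const_mul _).const_add _).deriv, mul_comm]

variable {ι : Type*} [Fintype ι] {ξ : ι → ℝ × F × ℝ → ℝ × F × ℝ} {b : ℝ × F × ℝ → ℝ × F × ℝ}

lemma exists_diffusionOp_hopfBarrier_zero_pos (b : ℝ × F × ℝ → ℝ × F × ℝ)
    (hξ : ∃ k, (ξ k 0).1 ≠ 0) : ∃ K ≥ 0, 0 < diffusionOp ξ b (hopfBarrier K) 0 := by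
  obtain ⟨k, hk⟩ := hξ
  have hnormal : 0 < ∑ k, (ξ k 0).1 ^ 2 :=
    Finset.sum_pos' (fun _ _ => sq_nonneg _) ⟨k, Finset.mem_univ k, by positivity⟩
  have hformula (K : ℝ) : diffusionOp ξ b (hopfBarrier K) 0 =
      K * (2 * ∑ k, (ξ k 0).1 ^ 2) + ((b 0).2.2 - (b 0).1 - 2 * ∑ k, ‖(ξ k 0).2.1‖ ^ 2) := by
    simp only [diffusionOp, fderiv_hopfBarrier_zero, fderiv_fderiv_hopfBarrier_zero,
      ← Finset.mul_sum, Finset.sum_sub_distrib]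
    ring
  have hlim : Tendsto (fun K => diffusionOp ξ b (hopfBarrier K) 0) atTop atTop := by
    simp only [hformula]
    exact tendsto_atTop_add_const_right _ _ (tendsto_id.atTop_mul_const (by positivity))
  exact ((eventually_ge_atTop 0).and (hlim.eventually_gt_atTop 0)).exists

/-- The comparison step: at a negative minimum of `w - ε φ` over the cylinder the barrier is
positive, so the minimum is attained in the parabolic interior. -/
lemma mul_hopfBarrier_le_of_diffusionOp_nonpos [ProperSpace F] (hK : 0 ≤ K)
    (hrρ : r + K * r ^ 2 ≤ ρ ^ 2) (hρ : 0 ≤ ρ) (hε : 0 < ε)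
    (hw : ∀ p ∈ hopfCylinder F r ρ, ContDiffAt ℝ 2 w p)
    (hξ : ∀ p ∈ hopfCylinder F r ρ ∩ pastHalfSpace F, ∀ k, (ξ k p).2.2 = 0)
    (hb : ∀ p ∈ hopfCylinder F r ρ ∩ pastHalfSpace F, (b p).2.2 ≤ 0)
    (hLw : ∀ p ∈ hopfCylinder F r ρ ∩ pastHalfSpace F, diffusionOp ξ b w p ≤ 0)
    (hLφ : ∀ p ∈ hopfCylinder F r ρ, 0 < diffusionOp ξ b (hopfBarrier K) p)
    (hw₀ : ∀ p ∈ hopfCylinder F r ρ, 0 ≤ w p)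
    (hface : ∀ p ∈ hopfCylinder F r ρ, p.1 = -r → ε * hopfBarrier K p ≤ w p)
    (hp : p ∈ hopfCylinder F r ρ) : ε * hopfBarrier K p ≤ w p := by
  have hφ (q : ℝ × F × ℝ) : ContDiffAt ℝ 2 (ε • hopfBarrier K) q :=
    contDiff_hopfBarrier.contDiffAt.const_smul ε
  have hψ : ∀ q ∈ hopfCylinder F r ρ, ContDiffAt ℝ 2 (w - ε • hopfBarrier K) q :=
    fun q hq => (hw q hq).sub (hφ q)
  obtain ⟨q, hq, hmin⟩ := isCompact_hopfCylinder.exists_isMinOn ⟨p, hp⟩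
    fun q hq => (hψ q hq).continuousAt.continuousWithinAt
  suffices hnonneg : 0 ≤ w q - ε * hopfBarrier K q from sub_nonneg.1 (hnonneg.trans (hmin hp))
  by_contra! hneg
  have hlt : w q < ε * hopfBarrier K q := sub_neg.1 hneg
  have hpos : 0 < hopfBarrier K q := pos_of_mul_pos_right ((hw₀ q hq).trans_lt hlt) hε.le
  obtain ⟨hx, hy, ht⟩ := mem_of_hopfBarrier_pos hK hrρ hρ hq hpos
  have hx' : -r < q.1 := hx.1.lt_of_ne fun h => (hface q hq h.symm).not_gt hlt
  have hstay := eventually_add_smul_mem_hopfCylinder ⟨⟨hx', hx.2⟩, hy, ht⟩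
  have hqH : q ∈ hopfCylinder F r ρ ∩ pastHalfSpace F := ⟨hq, hx.2, ht.2⟩
  have hmin_ge : 0 ≤ diffusionOp ξ b (w - ε • hopfBarrier K) q := by
    refine diffusionOp_nonneg_of_isMinOn (hψ q hq) hmin (fun k => ?_) ?_
    · filter_upwards [hstay (ξ k q)] with s hs
      exact hs (by simp [hξ q hqH k])
    · filter_upwards [nhdsWithin_le_nhds (hstay (b q)), self_mem_nhdsWithin] with s hs hs₀
      exact hs (mul_nonpos_of_nonneg_of_nonpos (le_of_lt hs₀) (hb q hqH))
  rw [diffusionOp_sub (hw q hq) (hφ q), diffusionOp_const_smul] at hmin_ge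
  linarith [hLw q hqH, mul_pos hε (hLφ q hq)]

lemma exists_mul_hopfBarrier_le_of_diffusionOp_nonpos [ProperSpace F]
    (hw : ContDiffAt ℝ 2 w 0)
    (hξ : ∀ k, ContinuousAt (ξ k) 0) (hb : ContinuousAt b 0) (hξ₀ : ∃ k, (ξ k 0).1 ≠ 0)
    (hξt : ∀ᶠ p in 𝓝[pastHalfSpace F] 0, ∀ k, (ξ k p).2.2 = 0)
    (hbt : ∀ᶠ p in 𝓝[pastHalfSpace F] 0, (b p).2.2 ≤ 0)
    (hLw : ∀ᶠ p in 𝓝[pastHalfSpace F] 0, diffusionOp ξ b w p ≤ 0)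
    (hpos : ∀ᶠ p in 𝓝[pastHalfSpace F] 0, 0 < w p) :
    ∃ ε > 0, ∃ K, ∃ r > 0, ∃ ρ ≥ 0, ∀ p ∈ hopfCylinder F r ρ, ε * hopfBarrier K p ≤ w p := by
  obtain ⟨K, hK, hLφ₀⟩ := exists_diffusionOp_hopfBarrier_zero_pos b hξ₀
  have hLφ : ∀ᶠ p in 𝓝 0, 0 < diffusionOp ξ b (hopfBarrier K) p :=
    (continuousAt_diffusionOp hξ hb contDiff_hopfBarrier.contDiffAt).eventually_const_lt hLφ₀
  obtain ⟨r, hr, ρ, hρ, hrρ, hsub⟩ := exists_hopfCylinder_subset K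
    ((hw.eventually (by simp)).and <| hLφ.and <| eventually_nhdsWithin_iff.1 <|
      hξt.and <| hbt.and <| hLw.and hpos)
  have hw₂ : ∀ p ∈ hopfCylinder F r ρ, ContDiffAt ℝ 2 w p := fun p hp => (hsub hp).1
  have hw₀ : ∀ p ∈ hopfCylinder F r ρ, 0 ≤ w p := fun p =>
    nonneg_on_hopfCylinder (fun p hp => (hw₂ p hp).continuousAt) hr
      fun p hp => ((hsub hp.1).2.2 hp.2).2.2.2
  obtain ⟨ε, hε, hface⟩ : ∃ ε > 0, ∀ p ∈ hopfCylinder F r ρ ∩ {p | p.1 = -r},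
      ε * hopfBarrier K p ≤ w p := by
    refine exists_pos_mul_le_of_isCompact
      (isCompact_hopfCylinder.inter_right (isClosed_eq continuous_fst continuous_const))
      (contDiff_hopfBarrier (n := 0)).continuous.continuousOn
      (fun p hp => (hw₂ p hp.1).continuousAt.continuousWithinAt) fun p hp => ?_
    exact ((hsub hp.1).2.2 ⟨hp.2.trans_lt (neg_lt_zero.2 hr), hp.1.2.2.2⟩).2.2.2
  exact ⟨ε, hε, K, r, hr, ρ, hρ.le, fun p hp =>
    mul_hopfBarrier_le_of_diffusionOp_nonpos hK hrρ hρ.le hε hw₂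
      (fun p hp => ((hsub hp.1).2.2 hp.2).1) (fun p hp => ((hsub hp.1).2.2 hp.2).2.1)
      (fun p hp => ((hsub hp.1).2.2 hp.2).2.2.1) (fun p hp => (hsub hp).2.1) hw₀
      (fun p hp hx => hface p ⟨hp, hx⟩) hp⟩

/-- `hξ₀` says that the boundary `{x₁ = 0}` is noncharacteristic at the origin. -/
theorem fderiv_neg_of_diffusionOp_nonpos [ProperSpace F]
    (hw : ContDiffAt ℝ 2 w 0)
    (hξ : ∀ k, ContinuousAt (ξ k) 0) (hb : ContinuousAt b 0) (hξ₀ : ∃ k, (ξ k 0).1 ≠ 0)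
    (hξt : ∀ᶠ p in 𝓝[pastHalfSpace F] 0, ∀ k, (ξ k p).2.2 = 0)
    (hbt : ∀ᶠ p in 𝓝[pastHalfSpace F] 0, (b p).2.2 ≤ 0)
    (hLw : ∀ᶠ p in 𝓝[pastHalfSpace F] 0, diffusionOp ξ b w p ≤ 0)
    (hpos : ∀ᶠ p in 𝓝[pastHalfSpace F] 0, 0 < w p) (hw₀ : w 0 = 0) :
    fderiv ℝ w 0 (1, 0, 0) < 0 := by
  obtain ⟨ε, hε, K, r, hr, ρ, hρ, hle⟩ :=
    exists_mul_hopfBarrier_le_of_diffusionOp_nonpos hw hξ hb hξ₀ hξt hbt hLw hpos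
  have hmin : IsMinOn (w - ε • hopfBarrier K) (hopfCylinder F r ρ) 0 := by
    intro p hp
    simpa [hw₀, hopfBarrier_zero] using hle p hp
  have hinward : ∀ᶠ s : ℝ in 𝓝[>] 0, 0 + s • ((-1, 0, 0) : ℝ × F × ℝ) ∈ hopfCylinder F r ρ := by
    filter_upwards [Ioo_mem_nhdsGT hr] with s hs
    have h₀ := zero_mem_hopfCylinder (F := F) hr.le hρ
    simpa [hopfCylinder, hs.1.le, hs.2.le] using h₀.2
  have hw₁ : DifferentiableAt ℝ w 0 := hw.differentiableAt two_ne_zero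
  have hφ₁ : DifferentiableAt ℝ (hopfBarrier K : ℝ × F × ℝ → ℝ) 0 :=
    (contDiff_hopfBarrier (n := 1)).differentiable one_ne_zero 0
  have hslope := fderiv_apply_nonneg_of_isMinOn (hw₁.sub (hφ₁.const_smul ε)) hmin hinward
  have hreflect : ((-1, 0, 0) : ℝ × F × ℝ) = -(1, 0, 0) := by simp
  rw [fderiv_sub hw₁ (hφ₁.const_smul ε), fderiv_const_smul hφ₁, sub_apply, smul_apply,
    fderiv_hopfBarrier_zero, hreflect, map_neg] at hslope
  simp only [Prod.fst_neg, Prod.snd_neg, neg_zero, zero_sub, neg_neg, smul_eq_mul, mul_one]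
    at hslope
  linarith

end LinearHopf

section PartialDerivatives

variable {f g : ℝ → ℝ → ℝ → ℝ} {p : ℝ × ℝ × ℝ}

lemma pd1_eq_fderiv (hf : DifferentiableAt ℝ ↿f p) :
    pd1 f p.1 p.2.1 p.2.2 = fderiv ℝ ↿f p (1, 0, 0) := by
  have hline : HasDerivAt (fun s => (s, p.2.1, p.2.2)) (1, 0, 0) p.1 :=
    (hasDerivAt_id p.1).prodMk (hasDerivAt_const p.1 (p.2.1, p.2.2))
  exact (hf.hasFDerivAt.comp_hasDerivAt p.1 hline).deriv

lemma pd2_eq_fderiv (hf : DifferentiableAt ℝ ↿f p) :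
    pd2 f p.1 p.2.1 p.2.2 = fderiv ℝ ↿f p (0, 1, 0) := by
  have hline : HasDerivAt (fun s => (p.1, s, p.2.2)) (0, 1, 0) p.2.1 :=
    (hasDerivAt_const p.2.1 p.1).prodMk
      ((hasDerivAt_id p.2.1).prodMk (hasDerivAt_const p.2.1 p.2.2))
  exact (hf.hasFDerivAt.comp_hasDerivAt p.2.1 hline).deriv

lemma pdt_eq_fderiv (hf : DifferentiableAt ℝ ↿f p) :
    pdt f p.1 p.2.1 p.2.2 = fderiv ℝ ↿f p (0, 0, 1) := by
  have hline : HasDerivAt (fun s => (p.1, p.2.1, s)) (0, 0, 1) p.2.2 :=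
    (hasDerivAt_const p.2.2 p.1).prodMk
      ((hasDerivAt_const p.2.2 p.2.1).prodMk (hasDerivAt_id p.2.2))
  exact (hf.hasFDerivAt.comp_hasDerivAt p.2.2 hline).deriv

lemma fderiv_uncurry_apply (hf : DifferentiableAt ℝ ↿f p) (a b c : ℝ) :
    fderiv ℝ ↿f p (a, b, c) =
      a * pd1 f p.1 p.2.1 p.2.2 + b * pd2 f p.1 p.2.1 p.2.2 + c * pdt f p.1 p.2.1 p.2.2 := by
  have hsplit : ((a, b, c) : ℝ × ℝ × ℝ) = a • (1, 0, 0) + b • (0, 1, 0) + c • (0, 0, 1) := by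
    simp
  simp only [hsplit, map_add, map_smul, smul_eq_mul, pd1_eq_fderiv hf, pd2_eq_fderiv hf,
    pdt_eq_fderiv hf]

variable {n : WithTop ℕ∞}

lemma contDiffAt_of_eq_fderiv_apply {e : ℝ × ℝ × ℝ}
    (hg : ∀ {q}, DifferentiableAt ℝ ↿f q → ↿g q = fderiv ℝ ↿f q e)
    (hf : ContDiffAt ℝ (n + 1) ↿f p) : ContDiffAt ℝ n ↿g p := by
  have hfderiv : ContDiffAt ℝ n (fun q => fderiv ℝ ↿f q e) p :=
    (hf.fderiv_right le_rfl).clm_apply contDiffAt_const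
  refine hfderiv.congr_of_eventuallyEq ?_
  filter_upwards [(hf.of_le le_add_self).eventually (by simp)] with q hq
  exact hg (hq.differentiableAt one_ne_zero)

lemma contDiffAt_pd1 (hf : ContDiffAt ℝ (n + 1) ↿f p) : ContDiffAt ℝ n ↿(pd1 f) p :=
  contDiffAt_of_eq_fderiv_apply pd1_eq_fderiv hf

lemma contDiffAt_pd2 (hf : ContDiffAt ℝ (n + 1) ↿f p) : ContDiffAt ℝ n ↿(pd2 f) p :=
  contDiffAt_of_eq_fderiv_apply pd2_eq_fderiv hf

lemma contDiffAt_pdt (hf : ContDiffAt ℝ (n + 1) ↿f p) : ContDiffAt ℝ n ↿(pdt f) p :=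
  contDiffAt_of_eq_fderiv_apply pdt_eq_fderiv hf

lemma fderiv_fderiv_uncurry_apply (hf : ContDiffAt ℝ 2 ↿f p) (a b : ℝ) :
    fderiv ℝ (fderiv ℝ ↿f) p (a, b, 0) (a, b, 0) =
      a ^ 2 * pd11 f p.1 p.2.1 p.2.2 + a * b * (pd12 f p.1 p.2.1 p.2.2 + pd21 f p.1 p.2.1 p.2.2)
        + b ^ 2 * pd22 f p.1 p.2.1 p.2.2 := by
  rw [← one_add_one_eq_two] at hf
  have h₁ : DifferentiableAt ℝ ↿(pd1 f) p := (contDiffAt_pd1 hf).differentiableAt one_ne_zero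
  have h₂ : DifferentiableAt ℝ ↿(pd2 f) p := (contDiffAt_pd2 hf).differentiableAt one_ne_zero
  have hfirst : (fun q => fderiv ℝ ↿f q (a, b, 0)) =ᶠ[𝓝 p] a • ↿(pd1 f) + b • ↿(pd2 f) := by
    filter_upwards [(hf.of_le le_add_self).eventually (by simp)] with q hq
    rw [fderiv_uncurry_apply (hq.differentiableAt one_ne_zero), zero_mul, add_zero]
    rfl
  have hsecond : fderiv ℝ (fderiv ℝ ↿f) p (a, b, 0) (a, b, 0) =
      fderiv ℝ (a • ↿(pd1 f) + b • ↿(pd2 f)) p (a, b, 0) := by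
    rw [← hfirst.fderiv_eq, fderiv_clm_apply
      (differentiableAt_fderiv_of_contDiffAt hf) (differentiableAt_const _)]
    simp
  rw [hsecond, fderiv_add (h₁.const_smul a) (h₂.const_smul b), fderiv_const_smul h₁,
    fderiv_const_smul h₂, add_apply, smul_apply, smul_apply, fderiv_uncurry_apply h₁,
    fderiv_uncurry_apply h₂]
  simp only [smul_eq_mul, pd11, pd12, pd21, pd22, pd1, pd2]
  ring

end PartialDerivatives

section GraphicalMCF

variable {u v f : ℝ → ℝ → ℝ → ℝ} {p : ℝ × ℝ × ℝ}

/-- The right-hand side minus the left-hand side of the graphical mean curvature flow equation,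
multiplied by `1 + |Df|²`. It is nonnegative for subsolutions and nonpositive for
supersolutions. -/
def mcfResidual (f : ℝ → ℝ → ℝ → ℝ) (x₁ x₂ t : ℝ) : ℝ :=
  (1 + pd2 f x₁ x₂ t ^ 2) * pd11 f x₁ x₂ t
    - pd1 f x₁ x₂ t * pd2 f x₁ x₂ t * (pd12 f x₁ x₂ t + pd21 f x₁ x₂ t)
    + (1 + pd1 f x₁ x₂ t ^ 2) * pd22 f x₁ x₂ t
    - gradQ f x₁ x₂ t * pdt f x₁ x₂ t

lemma mcfResidual_eq_zero {S : Set (ℝ × ℝ × ℝ)} (hf : IsGraphicalMCF S f) (hp : p ∈ S) :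
    mcfResidual f p.1 p.2.1 p.2.2 = 0 := by
  have hQ : gradQ f p.1 p.2.1 p.2.2 ≠ 0 := by unfold gradQ; positivity
  rw [mcfResidual, hf.2 p hp]
  field_simp
  rw [gradQ]
  ring

/-- The vector fields `e₁`, `e₂` and `(∂₂f, -∂₁f)`, whose squares sum to the principal part
`(1 + |Df|²) I - Df ⊗ Df` of the mean curvature operator. -/
def mcfFrame (f : ℝ → ℝ → ℝ → ℝ) : Fin 3 → ℝ × ℝ × ℝ → ℝ × ℝ × ℝ :=
  ![fun _ => (1, 0, 0), fun _ => (0, 1, 0), fun p => (↿(pd2 f) p, -↿(pd1 f) p, 0)]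

/-- The drift of the linearized equation for `v - u`. Its spatial part consists of the difference
quotients in the gradient of `mcfResidual`, with the second and time derivatives of `u` frozen. -/
def mcfDrift (u v : ℝ → ℝ → ℝ → ℝ) (p : ℝ × ℝ × ℝ) : ℝ × ℝ × ℝ :=
  ((↿(pd1 v) p + ↿(pd1 u) p) * (↿(pd22 u) p - ↿(pdt u) p)
      - ↿(pd2 u) p * (↿(pd12 u) p + ↿(pd21 u) p),
    (↿(pd2 v) p + ↿(pd2 u) p) * (↿(pd11 u) p - ↿(pdt u) p)
      - ↿(pd1 v) p * (↿(pd12 u) p + ↿(pd21 u) p),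
    -↿(gradQ v) p)

lemma diffusionOp_mcfFrame_sub (hu : ContDiffAt ℝ 2 ↿u p) (hv : ContDiffAt ℝ 2 ↿v p) :
    diffusionOp (mcfFrame v) (mcfDrift u v) (↿v - ↿u) p =
      mcfResidual v p.1 p.2.1 p.2.2 - mcfResidual u p.1 p.2.1 p.2.2 := by
  rw [diffusionOp_sub hv hu]
  simp only [diffusionOp, mcfFrame, mcfDrift, Fin.sum_univ_three, Matrix.cons_val,
    fderiv_fderiv_uncurry_apply hu, fderiv_fderiv_uncurry_apply hv,
    fderiv_uncurry_apply (hu.differentiableAt two_ne_zero),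
    fderiv_uncurry_apply (hv.differentiableAt two_ne_zero), mcfResidual]
  simp only [Function.HasUncurry.uncurry, id, gradQ]
  ring

lemma continuousAt_mcfFrame (hf : ContDiffAt ℝ 1 ↿f p) (k : Fin 3) :
    ContinuousAt (mcfFrame f k) p := by
  rw [← zero_add 1] at hf
  have h₁ : ContinuousAt ↿(pd1 f) p := (contDiffAt_pd1 hf).continuousAt
  have h₂ : ContinuousAt ↿(pd2 f) p := (contDiffAt_pd2 hf).continuousAt
  fin_cases k
  · exact continuousAt_const
  · exact continuousAt_const
  · exact h₂.prodMk (h₁.neg.prodMk continuousAt_const)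

lemma continuousAt_mcfDrift (hu : ContDiffAt ℝ 2 ↿u p) (hv : ContDiffAt ℝ 1 ↿v p) :
    ContinuousAt (mcfDrift u v) p := by
  rw [← one_add_one_eq_two] at hu
  rw [← zero_add 1] at hv
  have hu₁ := contDiffAt_pd1 hu
  have hu₂ := contDiffAt_pd2 hu
  have hut : ContinuousAt ↿(pdt u) p := (contDiffAt_pdt hu).continuousAt
  have hv₁ : ContinuousAt ↿(pd1 v) p := (contDiffAt_pd1 hv).continuousAt
  have hv₂ : ContinuousAt ↿(pd2 v) p := (contDiffAt_pd2 hv).continuousAt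
  rw [← zero_add 1] at hu₁ hu₂
  have hu₁₁ : ContinuousAt ↿(pd11 u) p := (contDiffAt_pd1 hu₁).continuousAt
  have hu₁₂ : ContinuousAt ↿(pd12 u) p := (contDiffAt_pd2 hu₁).continuousAt
  have hu₂₁ : ContinuousAt ↿(pd21 u) p := (contDiffAt_pd1 hu₂).continuousAt
  have hu₂₂ : ContinuousAt ↿(pd22 u) p := (contDiffAt_pd2 hu₂).continuousAt
  have hQ : ContinuousAt ↿(gradQ v) p := ((hv₁.pow 2).const_add 1).add (hv₂.pow 2)
  exact (((hv₁.add hu₁.continuousAt).mul (hu₂₂.sub hut)).sub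
    (hu₂.continuousAt.mul (hu₁₂.add hu₂₁))).prodMk <|
    (((hv₂.add hu₂.continuousAt).mul (hu₁₁.sub hut)).sub (hv₁.mul (hu₁₂.add hu₂₁))).prodMk hQ.neg

theorem hopf_lemma_graphical_MCF_general
    (hu : ContDiffAt ℝ 2 ↿u 0) (hv : ContDiffAt ℝ 2 ↿v 0)
    (hsub : ∀ᶠ p in 𝓝[pastHalfSpace ℝ] 0, 0 ≤ mcfResidual u p.1 p.2.1 p.2.2)
    (hsuper : ∀ᶠ p in 𝓝[pastHalfSpace ℝ] 0, mcfResidual v p.1 p.2.1 p.2.2 ≤ 0)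
    (heq : u 0 0 0 = v 0 0 0)
    (hlt : ∀ᶠ p in 𝓝[pastHalfSpace ℝ] 0, u p.1 p.2.1 p.2.2 < v p.1 p.2.1 p.2.2) :
    pd1 v 0 0 0 < pd1 u 0 0 0 := by
  have hu₁ : DifferentiableAt ℝ ↿u 0 := hu.differentiableAt two_ne_zero
  have hv₁ : DifferentiableAt ℝ ↿v 0 := hv.differentiableAt two_ne_zero
  have hlinear : ∀ᶠ p in 𝓝[pastHalfSpace ℝ] 0,
      diffusionOp (mcfFrame v) (mcfDrift u v) (↿v - ↿u) p ≤ 0 := by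
    filter_upwards [hsub, hsuper, nhdsWithin_le_nhds (hu.eventually (by simp)),
      nhdsWithin_le_nhds (hv.eventually (by simp))] with p hpu hpv hup hvp
    rw [diffusionOp_mcfFrame_sub hup hvp]
    linarith
  have hslope : fderiv ℝ (↿v - ↿u) 0 (1, 0, 0) < 0 := by
    refine fderiv_neg_of_diffusionOp_nonpos (hv.sub hu)
      (continuousAt_mcfFrame (hv.of_le one_le_two)) (continuousAt_mcfDrift hu (hv.of_le one_le_two))
      ⟨0, one_ne_zero⟩ (.of_forall fun p k => ?_) (.of_forall fun p => ?_) hlinear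
      (hlt.mono fun p => sub_pos.2) (sub_eq_zero.2 heq.symm)
    · fin_cases k <;> rfl
    · exact neg_nonpos.2 (by simp only [Function.HasUncurry.uncurry, id, gradQ]; positivity)
  rw [fderiv_sub hv₁ hu₁, sub_apply, ← pd1_eq_fderiv hv₁, ← pd1_eq_fderiv hu₁] at hslope
  exact sub_neg.1 hslope

lemma eventually_mem_pball {δ : ℝ} (hδ : 0 < δ) :
    ∀ᶠ p in 𝓝[pastHalfSpace ℝ] 0, p ∈ pball δ := by
  have hball : ∀ᶠ p : ℝ × ℝ × ℝ in 𝓝 0, p.1 ^ 2 + p.2.1 ^ 2 < δ ^ 2 :=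
    (isOpen_lt (by fun_prop) continuous_const).mem_nhds (by simp [hδ])
  have htime : ∀ᶠ p : ℝ × ℝ × ℝ in 𝓝 0, -δ ^ 2 < p.2.2 :=
    (isOpen_lt continuous_const (by fun_prop)).mem_nhds (by simp [hδ])
  filter_upwards [nhdsWithin_le_nhds hball, nhdsWithin_le_nhds htime, self_mem_nhdsWithin]
    with p h₁ h₂ hp
  exact ⟨h₁, h₂, hp.2⟩

end GraphicalMCF

/-- Hopf lemma for graphical mean curvature flow: if `u` and `v` are graphical
solutions of the mean curvature flow in `P(0,δ) ∩ {x₁ ≤ 0}` with `u(0,0) = v(0,0)`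
and `u < v` at every point of `P(0,δ)` with `x₁ < 0`, then
`∂u/∂x₁(0,0) > ∂v/∂x₁(0,0)`. -/
theorem hopf_lemma_graphical_MCF
    (δ : ℝ) (hδ : 0 < δ)
    (u v : ℝ → ℝ → ℝ → ℝ)
    (hu : IsGraphicalMCF (pball δ ∩ {p : ℝ × ℝ × ℝ | p.1 ≤ 0}) u)
    (hv : IsGraphicalMCF (pball δ ∩ {p : ℝ × ℝ × ℝ | p.1 ≤ 0}) v)
    (heq : u 0 0 0 = v 0 0 0)
    (hlt : ∀ p ∈ pball δ, p.1 < 0 → u p.1 p.2.1 p.2.2 < v p.1 p.2.1 p.2.2) :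
    pd1 v 0 0 0 < pd1 u 0 0 0 := by
  have hball := eventually_mem_pball hδ
  have hdom : ∀ᶠ p in 𝓝[pastHalfSpace ℝ] 0, p ∈ pball δ ∩ {p : ℝ × ℝ × ℝ | p.1 ≤ 0} :=
    hball.and (eventually_mem_nhdsWithin.mono fun p hp => hp.1.le)
  exact hopf_lemma_graphical_MCF_general (hu.1.of_le ENat.LEInfty.out).contDiffAt
    (hv.1.of_le ENat.LEInfty.out).contDiffAt (hdom.mono fun p hp => (mcfResidual_eq_zero hu hp).ge)
    (hdom.mono fun p hp => (mcfResidual_eq_zero hv hp).le) heq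
    (hball.mp (eventually_mem_nhdsWithin.mono fun p hp hpball => hlt p hpball hp.1))
end
end

section
/- Strong maximum principle for graphical mean curvature flow: let δ > 0 and let u and v be graphical solutions of the mean curvature flow in P(0,δ). Suppose that u(0,0) = v(0,0) and that u ≤ v everywhere in P(0,δ). Then u = v in P(0,δ). -/
noncomputable section

/-!
The difference `w = v - u ≥ 0` is a supersolution of a linear parabolic equation, uniformly
parabolic with bounded drift on compact sets. If `w` is positive at some point, it is positive on a
small disc around it at that time. Move this disc linearly in time, along a thin tube ending at
a prescribed later point. For `K` large the barrier `ε e^{-K(t-t₀)} (r² - |y|²)²`, with `y` the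
offset from the axis of the tube, is a strict subsolution, so it stays below `w` and `w` is positive
at the end of the tube. Hence a zero of `w` at the final time forces zeros at all earlier times,
first at all points visible from it along a segment, and then throughout a connected domain.
-/

open scoped Topology Matrix RealInnerProductSpace

/-- Space-time `ℝⁿ × ℝ`, with the coordinates of `ℝⁿ` indexed by `ι` and time last. -/
abbrev Spacetime (ι : Type*) : Type _ := EuclideanSpace ℝ ι × ℝ

section Matrices

variable {ι : Type*} [Fintype ι]

theorem trace_mul_vecMulVec (A : Matrix ι ι ℝ) (x : ι → ℝ) :
    (A * Matrix.vecMulVec x x).trace = x ⬝ᵥ A *ᵥ x := by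
  rw [Matrix.mul_vecMulVec, Matrix.trace_vecMulVec, dotProduct_comm]

theorem trace_mul_nonneg_of_posSemidef {A H : Matrix ι ι ℝ} (hA : A.PosSemidef)
    (hH : H.PosSemidef) : 0 ≤ (A * H).trace := by
  classical
  obtain ⟨C, rfl⟩ : ∃ C : Matrix ι ι ℝ, A = Cᴴ * C := by
    open scoped MatrixOrder in
    exact CStarAlgebra.nonneg_iff_eq_star_mul_self.mp hA.nonneg
  rw [Matrix.mul_assoc, Matrix.trace_mul_comm]
  exact (hH.mul_mul_conjTranspose_same C).trace_nonneg

theorem dotProduct_sub_smul_one_mulVec [DecidableEq ι] (A : Matrix ι ι ℝ) (θ : ℝ)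
    (y : EuclideanSpace ℝ ι) :
    y ⬝ᵥ (A - θ • 1) *ᵥ y = y ⬝ᵥ A *ᵥ y - θ * ‖y‖ ^ 2 := by
  rw [EuclideanSpace.real_norm_sq_eq]
  simp only [Matrix.sub_mulVec, Matrix.smul_mulVec, Matrix.one_mulVec, dotProduct_sub,
    dotProduct_smul, smul_eq_mul]
  simp only [dotProduct, sq]

open scoped Matrix.Norms.Elementwise in
theorem abs_trace_mul_le (A H : Matrix ι ι ℝ) :
    |(A * H).trace| ≤ Fintype.card ι ^ 2 * (‖A‖ * ‖H‖) := by
  calc |(A * H).trace| = |∑ i, ∑ j, A i j * H j i| := by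
        simp [Matrix.trace, Matrix.mul_apply]
    _ ≤ ∑ i, ∑ j, |A i j * H j i| :=
        (Finset.abs_sum_le_sum_abs _ _).trans
          (Finset.sum_le_sum fun _ _ => Finset.abs_sum_le_sum_abs _ _)
    _ ≤ ∑ _i : ι, ∑ _j : ι, ‖A‖ * ‖H‖ := by
        gcongr with i _ j _
        rw [abs_mul]
        gcongr
        exacts [A.norm_entry_le_entrywise_sup_norm, H.norm_entry_le_entrywise_sup_norm]
    _ = Fintype.card ι ^ 2 * (‖A‖ * ‖H‖) := by
        simp only [Finset.sum_const, Finset.card_univ, nsmul_eq_mul]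
        ring

end Matrices

section LineMin

variable {V : Type*} [NormedAddCommGroup V] [NormedSpace ℝ V]

theorem deriv_deriv_nonneg_of_isLocalMin_s4 {g : ℝ → ℝ} {x : ℝ} (hg : ContinuousAt g x)
    (hmin : IsLocalMin g x) : 0 ≤ deriv (deriv g) x := by
  by_contra! hneg
  have hmax : IsLocalMax g x := isLocalMax_of_deriv_deriv_neg hneg hmin.deriv_eq_zero hg
  have hconst : g =ᶠ[𝓝 x] fun _ => g x := by
    filter_upwards [hmin, hmax] with y hy₁ hy₂ using le_antisymm hy₂ hy₁
  have := hconst.deriv.deriv_eq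
  simp_all

theorem hasFDerivAt_fderiv_apply {f : V → ℝ} {p : V} (hf : ContDiffAt ℝ 2 f p) (v : V) :
    HasFDerivAt (fun q => fderiv ℝ f q v) ((fderiv ℝ (fderiv ℝ f) p).flip v) p := by
  have hdf : DifferentiableAt ℝ (fderiv ℝ f) p :=
    (hf.fderiv_right (m := 1) le_rfl).differentiableAt (by simp)
  simpa using hdf.hasFDerivAt.clm_apply (hasFDerivAt_const v p)

theorem fderiv_fderiv_apply_nonneg_of_isLocalMin_line {f : V → ℝ} {p v : V}
    (hf : ContDiffAt ℝ 2 f p) (hmin : IsLocalMin (fun s : ℝ => f (p + s • v)) 0) :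
    0 ≤ fderiv ℝ (fderiv ℝ f) p v v := by
  have hline (s : ℝ) : HasDerivAt (fun s : ℝ => p + s • v) v s := by
    simpa using ((hasDerivAt_id s).smul_const v).const_add p
  have htendsto : Filter.Tendsto (fun s : ℝ => p + s • v) (𝓝 0) (𝓝 p) := by
    simpa using (hline 0).continuousAt.tendsto
  have hfirst : deriv (fun s : ℝ => f (p + s • v)) =ᶠ[𝓝 0]
      fun s => fderiv ℝ f (p + s • v) v := by
    filter_upwards [htendsto.eventually (hf.eventually (by simp))] with s hs
    exact ((hs.differentiableAt (by simp)).hasFDerivAt.comp_hasDerivAt s (hline s)).deriv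
  have hsecond : HasDerivAt (fun s : ℝ => fderiv ℝ f (p + s • v) v)
      (fderiv ℝ (fderiv ℝ f) p v v) 0 :=
    (hasFDerivAt_fderiv_apply hf v).comp_hasDerivAt_of_eq 0 (hline 0) (by simp)
  rw [← hsecond.deriv, ← hfirst.deriv_eq]
  refine deriv_deriv_nonneg_of_isLocalMin_s4 ?_ hmin
  exact ContinuousAt.comp (g := f) (by simpa using hf.continuousAt) (hline 0).continuousAt

end LineMin

section Derivatives

variable {ι : Type*} [Fintype ι] {v w : Spacetime ι → ℝ} {p : Spacetime ι}

/-- The time derivative `∂ₜw`. -/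
def timeDeriv (w : Spacetime ι → ℝ) (p : Spacetime ι) : ℝ := fderiv ℝ w p (0, 1)

theorem timeDeriv_sub (hv : DifferentiableAt ℝ v p) (hw : DifferentiableAt ℝ w p) :
    timeDeriv (v - w) p = timeDeriv v p - timeDeriv w p := by
  simp [timeDeriv, fderiv_sub hv hw]

variable [DecidableEq ι]

/-- The unit vector of space-time in the `i`-th spatial direction. -/
def spatialBasis (i : ι) : Spacetime ι := (EuclideanSpace.single i 1, 0)

/-- The spatial gradient `Dw`, read off from the full space-time derivative. -/
def spatialGradient (w : Spacetime ι → ℝ) (p : Spacetime ι) : EuclideanSpace ℝ ι :=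
  WithLp.toLp 2 fun i => fderiv ℝ w p (spatialBasis i)

/-- The spatial Hessian `D²w`; the entry `i j` is `∂ᵢ∂ⱼw`. -/
def spatialHessian (w : Spacetime ι → ℝ) (p : Spacetime ι) : Matrix ι ι ℝ :=
  .of fun i j => fderiv ℝ (fderiv ℝ w) p (spatialBasis i) (spatialBasis j)

theorem spatialGradient_sub (hv : DifferentiableAt ℝ v p) (hw : DifferentiableAt ℝ w p) :
    spatialGradient (v - w) p = spatialGradient v p - spatialGradient w p := by
  ext i
  simp [spatialGradient, fderiv_sub hv hw]

theorem spatialHessian_sub (hv : ContDiffAt ℝ 2 v p) (hw : ContDiffAt ℝ 2 w p) :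
    spatialHessian (v - w) p = spatialHessian v p - spatialHessian w p := by
  have hfirst : fderiv ℝ (v - w) =ᶠ[𝓝 p] fderiv ℝ v - fderiv ℝ w := by
    filter_upwards [hv.eventually (by simp), hw.eventually (by simp)] with q hvq hwq
    exact fderiv_sub (hvq.differentiableAt (by simp)) (hwq.differentiableAt (by simp))
  ext i j
  simp only [spatialHessian, Matrix.of_apply, Matrix.sub_apply]
  rw [hfirst.fderiv_eq, fderiv_sub ((hv.fderiv_right (m := 1) le_rfl).differentiableAt (by simp))
    ((hw.fderiv_right (m := 1) le_rfl).differentiableAt (by simp))]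
  simp

theorem continuousAt_spatialGradient (hw : ContDiffAt ℝ 2 w p) :
    ContinuousAt (spatialGradient w) p :=
  (PiLp.continuous_toLp 2 _).continuousAt.comp <| continuousAt_pi.2 fun i =>
    (hasFDerivAt_fderiv_apply hw (spatialBasis i)).continuousAt

theorem continuousAt_spatialHessian (hw : ContDiffAt ℝ 2 w p) :
    ContinuousAt (spatialHessian w) p := by
  have hw₂ : ContinuousAt (fderiv ℝ (fderiv ℝ w)) p :=
    ((hw.fderiv_right (m := 1) le_rfl).fderiv_right (m := 0) le_rfl).continuousAt
  exact continuousAt_pi.2 fun i => continuousAt_pi.2 fun j =>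
    (hw₂.clm_apply continuousAt_const).clm_apply continuousAt_const

end Derivatives

section ParabolicMin

variable {ι : Type*}

/-- The closed half-space of points not later than `p`. Local minimality relative to it is the
notion of minimum seen by parabolic equations, which have no information about the future. -/
def past (p : Spacetime ι) : Set (Spacetime ι) := {q | q.2 ≤ p.2}

variable [Fintype ι] {w : Spacetime ι → ℝ} {p : Spacetime ι}

theorem mem_posTangentConeAt_past {ξ : Spacetime ι} (hξ : ξ.2 ≤ 0) :
    ξ ∈ posTangentConeAt (past p) p :=
  mem_posTangentConeAt_of_segment_subset <|
    ((convex_Iic p.2).linear_preimage (LinearMap.snd ℝ _ ℝ)).segment_subset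
      (le_refl p.2) (by simpa using hξ)

theorem timeDeriv_nonpos_of_isLocalMinOn_past (hw : DifferentiableAt ℝ w p)
    (hmin : IsLocalMinOn w (past p) p) : timeDeriv w p ≤ 0 := by
  have h := hmin.hasFDerivWithinAt_nonneg hw.hasFDerivAt.hasFDerivWithinAt
    (mem_posTangentConeAt_past (ξ := -(0, 1)) (by simp))
  rwa [map_neg, Left.nonneg_neg_iff] at h

variable [DecidableEq ι]

theorem spatialGradient_eq_zero_of_isLocalMinOn_past (hw : DifferentiableAt ℝ w p)
    (hmin : IsLocalMinOn w (past p) p) : spatialGradient w p = 0 := by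
  ext i
  exact hmin.hasFDerivWithinAt_eq_zero hw.hasFDerivAt.hasFDerivWithinAt
    (mem_posTangentConeAt_past le_rfl) (mem_posTangentConeAt_past (by simp [spatialBasis]))

theorem posSemidef_spatialHessian_of_isLocalMinOn_past (hw : ContDiffAt ℝ 2 w p)
    (hmin : IsLocalMinOn w (past p) p) : (spatialHessian w p).PosSemidef := by
  refine .of_dotProduct_mulVec_nonneg (Matrix.IsHermitian.ext fun i j => ?_) fun y => ?_
  · exact hw.isSymmSndFDerivAt (by simp) _ _
  · set ξ : Spacetime ι := ∑ i, y i • spatialBasis i with hξ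
    have hline : IsLocalMin (fun s : ℝ => w (p + s • ξ)) 0 := by
      have htendsto : Filter.Tendsto (fun s : ℝ => p + s • ξ) (𝓝 0) (𝓝[past p] p) := by
        refine tendsto_nhdsWithin_iff.2 ⟨?_, .of_forall fun s => ?_⟩
        · exact (Continuous.tendsto' (by fun_prop) _ _ (by simp))
        · simp [past, hξ, spatialBasis, Prod.snd_sum]
      simpa [IsLocalMin, IsMinFilter] using htendsto.eventually hmin
    have h := fderiv_fderiv_apply_nonneg_of_isLocalMin_line hw hline
    simp only [hξ, map_sum, map_smul, sum_apply,
      smul_apply, smul_eq_mul, Finset.mul_sum] at h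
    simp only [dotProduct, Matrix.mulVec, spatialHessian, Matrix.of_apply, Finset.mul_sum,
      star_trivial]
    rw [Finset.sum_comm]
    simpa only [mul_left_comm, mul_comm, mul_assoc] using h

end ParabolicMin

section Comparison

variable {ι : Type*} [Fintype ι] [DecidableEq ι]

/-- The coefficient matrices of uniformly elliptic operators with ellipticity constant `θ` and
trace at most `Λ`. -/
def ellipticMatrices (ι : Type*) [Fintype ι] [DecidableEq ι] (θ Λ : ℝ) : Set (Matrix ι ι ℝ) :=
  {A | (A - θ • 1).PosSemidef ∧ A.trace ≤ Λ}

/-- `w` is at `p` a supersolution of some linear uniformly parabolic equation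
`∂ₜw = tr (A D²w) + b · Dw` with `‖b‖ ≤ B`; the drift is encoded by its extremal value. -/
def IsSupersolutionAt (θ Λ B : ℝ) (w : Spacetime ι → ℝ) (p : Spacetime ι) : Prop :=
  ∃ A ∈ ellipticMatrices ι θ Λ,
    (A * spatialHessian w p).trace - B * ‖spatialGradient w p‖ ≤ timeDeriv w p

/-- `w` is on `S` a supersolution of locally uniformly parabolic linear equations with locally
bounded drift. -/
def IsSupersolutionOn (w : Spacetime ι → ℝ) (S : Set (Spacetime ι)) : Prop :=
  ∀ T ⊆ S, IsCompact T → ∃ θ > 0, ∃ Λ, ∃ B ≥ 0, ∀ p ∈ T, IsSupersolutionAt θ Λ B w p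

/-- `φ` is at `p` a strict subsolution of every linear uniformly parabolic equation
`∂ₜφ = tr (A D²φ) + b · Dφ` with `‖b‖ ≤ B`. -/
def IsStrictSubsolutionAt (θ Λ B : ℝ) (φ : Spacetime ι → ℝ) (p : Spacetime ι) : Prop :=
  ∀ A ∈ ellipticMatrices ι θ Λ,
    timeDeriv φ p < (A * spatialHessian φ p).trace - B * ‖spatialGradient φ p‖

/-- The points of `T` around which `T` contains all sufficiently close points that are not later.
Its complement in `T` is the parabolic boundary. -/
def parabolicInterior (T : Set (Spacetime ι)) : Set (Spacetime ι) := {p ∈ T | T ∈ 𝓝[past p] p}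

variable {θ Λ B : ℝ} {φ w : Spacetime ι → ℝ} {p : Spacetime ι} {A : Matrix ι ι ℝ}

theorem posSemidef_of_mem_ellipticMatrices (hθ : 0 ≤ θ) (hA : A ∈ ellipticMatrices ι θ Λ) :
    A.PosSemidef := by
  simpa using hA.1.add (Matrix.PosSemidef.one.smul hθ)

theorem mul_norm_sq_le_of_mem_ellipticMatrices (hA : A ∈ ellipticMatrices ι θ Λ)
    (y : EuclideanSpace ℝ ι) : θ * ‖y‖ ^ 2 ≤ y ⬝ᵥ A *ᵥ y := by
  rw [← sub_nonneg, ← dotProduct_sub_smul_one_mulVec]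
  exact hA.1.dotProduct_mulVec_nonneg y

theorem not_isLocalMinOn_past_sub (hθ : 0 ≤ θ) (hw : ContDiffAt ℝ 2 w p)
    (hφ : ContDiffAt ℝ 2 φ p) (hsuper : IsSupersolutionAt θ Λ B w p)
    (hsub : IsStrictSubsolutionAt θ Λ B φ p) : ¬IsLocalMinOn (w - φ) (past p) p := by
  intro hmin
  obtain ⟨A, hA, hsuper⟩ := hsuper
  have hw₁ : DifferentiableAt ℝ w p := hw.differentiableAt (by simp)
  have hφ₁ : DifferentiableAt ℝ φ p := hφ.differentiableAt (by simp)
  have hgrad : spatialGradient w p = spatialGradient φ p := by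
    rw [← sub_eq_zero, ← spatialGradient_sub hw₁ hφ₁]
    exact spatialGradient_eq_zero_of_isLocalMinOn_past (hw₁.sub hφ₁) hmin
  have htime : timeDeriv w p ≤ timeDeriv φ p := by
    rw [← sub_nonpos, ← timeDeriv_sub hw₁ hφ₁]
    exact timeDeriv_nonpos_of_isLocalMinOn_past (hw₁.sub hφ₁) hmin
  have hhess : (A * spatialHessian φ p).trace ≤ (A * spatialHessian w p).trace := by
    rw [← sub_nonneg, ← Matrix.trace_sub, ← Matrix.mul_sub, ← spatialHessian_sub hw hφ]
    exact trace_mul_nonneg_of_posSemidef (posSemidef_of_mem_ellipticMatrices hθ hA)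
      (posSemidef_spatialHessian_of_isLocalMinOn_past (hw.sub hφ) hmin)
  have hlt := hsub A hA
  rw [hgrad] at hsuper
  linarith

theorem le_of_le_off_parabolicInterior (hθ : 0 ≤ θ) {T : Set (Spacetime ι)} (hT : IsCompact T)
    (hw : ∀ p ∈ T, ContDiffAt ℝ 2 w p) (hφ : ∀ p ∈ T, ContDiffAt ℝ 2 φ p)
    (hsuper : ∀ p ∈ T, IsSupersolutionAt θ Λ B w p)
    (hsub : ∀ p ∈ T, IsStrictSubsolutionAt θ Λ B φ p)
    (hle : ∀ p ∈ T \ parabolicInterior T, φ p ≤ w p) (hp : p ∈ T) : φ p ≤ w p := by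
  have hcont : ContinuousOn (w - φ) T := fun q hq =>
    ((hw q hq).continuousAt.sub (hφ q hq).continuousAt).continuousWithinAt
  obtain ⟨q, hqT, hmin⟩ := hT.exists_isMinOn ⟨p, hp⟩ hcont
  have hq : q ∉ parabolicInterior T := fun hq =>
    not_isLocalMinOn_past_sub hθ (hw q hqT) (hφ q hqT) (hsuper q hqT) (hsub q hqT)
      (Filter.mem_of_superset hq.2 hmin)
  have hle_p : (w - φ) q ≤ (w - φ) p := hmin hp
  have hle_q : φ q ≤ w q := hle q ⟨hqT, hq⟩
  simp only [Pi.sub_apply] at hle_p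
  linarith

end Comparison

section Barrier

variable {ι : Type*} [Fintype ι]

/-- The spatial displacement of `p` from the line `t ↦ c + t • k`. -/
def axisOffset (c k : EuclideanSpace ℝ ι) (p : Spacetime ι) : EuclideanSpace ℝ ι :=
  p.1 - (c + p.2 • k)

/-- The closed tube of radius `r` around the line `t ↦ c + t • k`, for `t₀ ≤ t ≤ t₁`. -/
def tube (c k : EuclideanSpace ℝ ι) (r t₀ t₁ : ℝ) : Set (Spacetime ι) :=
  {p | p.2 ∈ Set.Icc t₀ t₁ ∧ ‖axisOffset c k p‖ ≤ r}

/-- The bump `(r² - |y|²)²`, with `y` the offset from the moving centre `c + t • k`, multiplied by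
a factor which equals `ε` at time `t₀` and decays at rate `K`. -/
def barrier (c k : EuclideanSpace ℝ ι) (r t₀ ε K : ℝ) (p : Spacetime ι) : ℝ :=
  ε * Real.exp (-K * (p.2 - t₀)) * (r ^ 2 - ‖axisOffset c k p‖ ^ 2) ^ 2

variable {c k : EuclideanSpace ℝ ι} {r t₀ t₁ ε K : ℝ} {p : Spacetime ι}

theorem continuous_axisOffset : Continuous (axisOffset c k) := by
  unfold axisOffset
  fun_prop

theorem isCompact_tube : IsCompact (tube c k r t₀ t₁) := by
  have himage : tube c k r t₀ t₁ = (fun q : Spacetime ι => (q.1 + (c + q.2 • k), q.2)) ''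
      (Metric.closedBall 0 r ×ˢ Set.Icc t₀ t₁) := by
    ext p
    constructor
    · exact fun hp => ⟨(axisOffset c k p, p.2), by simpa using hp.symm, by simp [axisOffset]⟩
    · rintro ⟨q, ⟨hq, ht⟩, rfl⟩
      exact ⟨ht, by simpa [axisOffset] using hq⟩
  rw [himage]
  exact ((isCompact_closedBall 0 r).prod isCompact_Icc).image (by fun_prop)

theorem mem_parabolicInterior_tube (hp : p ∈ tube c k r t₀ t₁) (ht : t₀ < p.2)
    (hr : ‖axisOffset c k p‖ < r) : p ∈ parabolicInterior (tube c k r t₀ t₁) := by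
  have hnear : ∀ᶠ q in 𝓝 p, t₀ < q.2 ∧ ‖axisOffset c k q‖ < r :=
    (continuousAt_snd.eventually_const_lt ht).and
      (continuous_axisOffset.norm.continuousAt.eventually_lt_const hr)
  refine ⟨hp, ?_⟩
  filter_upwards [nhdsWithin_le_nhds hnear, self_mem_nhdsWithin] with q hq hqp
  exact ⟨⟨hq.1.le, le_trans hqp hp.1.2⟩, hq.2.le⟩

theorem fst_mem_cthickening_of_mem_tube {x x₀ : EuclideanSpace ℝ ι} (ht : t₀ < t₁)
    (hk : k = (t₁ - t₀)⁻¹ • (x₀ - x)) (hp : p ∈ tube (x - t₀ • k) k r t₀ t₁) :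
    p.1 ∈ Metric.cthickening r (segment ℝ x x₀) := by
  have hcentre : x - t₀ • k + p.2 • k = AffineMap.lineMap x x₀ ((p.2 - t₀) / (t₁ - t₀)) := by
    rw [hk, AffineMap.lineMap_apply_module']
    module
  have hmem : x - t₀ • k + p.2 • k ∈ segment ℝ x x₀ := by
    rw [hcentre, segment_eq_image_lineMap]
    have ht' := sub_pos.2 ht
    refine Set.mem_image_of_mem _ ⟨?_, ?_⟩
    · have := sub_nonneg.2 hp.1.1
      positivity
    · rw [div_le_one ht']
      linarith [hp.1.2]
  refine Metric.mem_cthickening_of_dist_le _ _ _ _ hmem ?_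
  simpa [dist_eq_norm, axisOffset] using hp.2

theorem contDiff_barrier {n : WithTop ℕ∞} : ContDiff ℝ n (barrier c k r t₀ ε K) := by
  have hy : ContDiff ℝ n (axisOffset c k) := by
    unfold axisOffset
    fun_prop
  have hd : ContDiff ℝ n fun q : Spacetime ι => ε * Real.exp (-K * (q.2 - t₀)) := by
    fun_prop
  exact hd.mul ((contDiff_const.sub (hy.norm_sq ℝ)).pow 2)

theorem hasFDerivAt_axisOffset : HasFDerivAt (axisOffset c k)
    (ContinuousLinearMap.fst ℝ (EuclideanSpace ℝ ι) ℝ -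
      (ContinuousLinearMap.snd ℝ (EuclideanSpace ℝ ι) ℝ).smulRight k) p :=
  hasFDerivAt_fst.sub ((hasFDerivAt_snd.smul_const k).const_add c)

theorem hasFDerivAt_exp_decay {V : Type*} [NormedAddCommGroup V] [NormedSpace ℝ V] {p : V × ℝ} :
    HasFDerivAt (fun q : V × ℝ => Real.exp (-K * (q.2 - t₀)))
      (Real.exp (-K * (p.2 - t₀)) • -K • ContinuousLinearMap.snd ℝ V ℝ) p :=
  ((hasFDerivAt_snd.sub_const t₀).const_mul (-K)).exp

theorem fderiv_barrier_apply (ξ : Spacetime ι) :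
    fderiv ℝ (barrier c k r t₀ ε K) p ξ = ε * Real.exp (-K * (p.2 - t₀)) *
      (-K * ξ.2 * (r ^ 2 - ‖axisOffset c k p‖ ^ 2) ^ 2 -
        4 * (r ^ 2 - ‖axisOffset c k p‖ ^ 2) * ⟪axisOffset c k p, ξ.1 - ξ.2 • k⟫) := by
  have h : HasFDerivAt (barrier c k r t₀ ε K) _ p :=
    (hasFDerivAt_exp_decay.const_mul ε).mul
      ((hasFDerivAt_axisOffset.norm_sq.const_sub (r ^ 2)).pow 2)
  rw [h.fderiv]
  simp only [neg_mul, Nat.add_one_sub_one, pow_one, nsmul_eq_mul, Nat.cast_ofNat,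
    ContinuousLinearMap.comp_sub, smul_neg, add_apply, neg_apply, smul_apply, sub_apply,
    ContinuousLinearMap.comp_apply, ContinuousLinearMap.coe_fst', coe_innerSL_apply,
    ContinuousLinearMap.smulRight_apply, ContinuousLinearMap.coe_snd', map_smul, smul_eq_mul,
    mul_neg, inner_sub_right, inner_smul_right]
  ring

theorem timeDeriv_barrier : timeDeriv (barrier c k r t₀ ε K) p =
    ε * Real.exp (-K * (p.2 - t₀)) * (-K * (r ^ 2 - ‖axisOffset c k p‖ ^ 2) ^ 2 +
      4 * (r ^ 2 - ‖axisOffset c k p‖ ^ 2) * ⟪axisOffset c k p, k⟫) := by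
  rw [timeDeriv, fderiv_barrier_apply]
  simp

variable [DecidableEq ι]

theorem fderiv_barrier_spatialBasis (i : ι) :
    fderiv ℝ (barrier c k r t₀ ε K) p (spatialBasis i) = ε * Real.exp (-K * (p.2 - t₀)) *
      (-4 * (r ^ 2 - ‖axisOffset c k p‖ ^ 2) * axisOffset c k p i) := by
  rw [fderiv_barrier_apply]
  simp [spatialBasis, EuclideanSpace.inner_single_right]

theorem spatialGradient_barrier : spatialGradient (barrier c k r t₀ ε K) p =
    (ε * Real.exp (-K * (p.2 - t₀)) * (-4 * (r ^ 2 - ‖axisOffset c k p‖ ^ 2))) •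
      axisOffset c k p := by
  ext i
  simp only [spatialGradient, fderiv_barrier_spatialBasis, PiLp.smul_apply, smul_eq_mul]
  ring

theorem spatialHessian_barrier : spatialHessian (barrier c k r t₀ ε K) p =
    (ε * Real.exp (-K * (p.2 - t₀))) •
      ((8 : ℝ) • Matrix.vecMulVec (axisOffset c k p) (axisOffset c k p) -
        (4 * (r ^ 2 - ‖axisOffset c k p‖ ^ 2)) • 1) := by
  ext i j
  have hfirst : (fun q => fderiv ℝ (barrier c k r t₀ ε K) q (spatialBasis j)) =
      fun q => ε * Real.exp (-K * (q.2 - t₀)) *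
        (-4 * (r ^ 2 - ‖axisOffset c k q‖ ^ 2) * axisOffset c k q j) :=
    funext fun q => fderiv_barrier_spatialBasis j
  have hentry : spatialHessian (barrier c k r t₀ ε K) p i j =
      fderiv ℝ (fun q => fderiv ℝ (barrier c k r t₀ ε K) q (spatialBasis j)) p
        (spatialBasis i) := by
    rw [(hasFDerivAt_fderiv_apply contDiff_barrier.contDiffAt (spatialBasis j)).fderiv]
    rfl
  have hyj : HasFDerivAt (fun q => axisOffset c k q j) _ p :=
    (EuclideanSpace.proj (𝕜 := ℝ) j).hasFDerivAt.comp p hasFDerivAt_axisOffset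
  have h : HasFDerivAt (fun q => ε * Real.exp (-K * (q.2 - t₀)) *
      (-4 * (r ^ 2 - ‖axisOffset c k q‖ ^ 2) * axisOffset c k q j)) _ p :=
    (hasFDerivAt_exp_decay.const_mul ε).mul
      (((hasFDerivAt_axisOffset.norm_sq.const_sub (r ^ 2)).const_mul (-4)).mul hyj)
  rw [hentry, hfirst, h.fderiv]
  simp only [neg_mul, ContinuousLinearMap.comp_sub, neg_smul, smul_neg, neg_neg, smul_add,
    spatialBasis, add_apply, neg_apply, smul_apply, sub_apply, ContinuousLinearMap.comp_apply,
    ContinuousLinearMap.coe_fst', PiLp.proj_apply, PiLp.single_apply, eq_comm,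
    ContinuousLinearMap.smulRight_apply, ContinuousLinearMap.coe_snd', zero_smul,
    PiLp.zero_apply, sub_zero, smul_eq_mul, mul_ite, mul_one, mul_zero, coe_innerSL_apply,
    EuclideanSpace.inner_single_right, Real.ringHom_apply, one_mul, inner_zero_right,
    nsmul_eq_mul, Nat.cast_ofNat, neg_zero, add_zero, Matrix.smul_apply, Matrix.sub_apply,
    Matrix.vecMulVec_apply, Matrix.one_apply]
  split_ifs <;> ring

theorem exists_forall_quadratic_pos (b : ℝ) {d : ℝ} (hd : 0 < d) :
    ∃ K, ∀ z, 0 < K * z ^ 2 - b * z + d := by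
  refine ⟨b ^ 2 / (2 * d), fun z => ?_⟩
  have hsq : b ^ 2 / (2 * d) * z ^ 2 - b * z + d = ((b * z - d) ^ 2 + d ^ 2) / (2 * d) := by
    field_simp
    ring
  rw [hsq]
  positivity

/-- Where the bump is small its Laplacian is positive by ellipticity, and elsewhere the decay in
time dominates; the two regimes are combined in one quadratic inequality for `z = r² - |y|²`. -/
theorem exists_isStrictSubsolutionAt_barrier {θ B : ℝ} (Λ : ℝ) (hθ : 0 < θ) (hB : 0 ≤ B)
    (hr : 0 < r) : ∃ K, ∀ ε > 0, ∀ p, ‖axisOffset c k p‖ ≤ r →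
      IsStrictSubsolutionAt θ Λ B (barrier c k r t₀ ε K) p := by
  obtain ⟨K, hK⟩ := exists_forall_quadratic_pos
    (4 * r * ‖k‖ + 8 * θ + 4 * Λ + 4 * B * r) (by positivity : 0 < 8 * θ * r ^ 2)
  refine ⟨K, fun ε hε p hp A hA => ?_⟩
  have hz : 0 ≤ r ^ 2 - ‖axisOffset c k p‖ ^ 2 := by
    rw [sub_nonneg]; gcongr
  rw [timeDeriv_barrier, spatialHessian_barrier, spatialGradient_barrier, norm_smul]
  set E := ε * Real.exp (-K * (p.2 - t₀))
  set y := axisOffset c k p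
  set z := r ^ 2 - ‖y‖ ^ 2 with hz_def
  have hE : 0 < E := by positivity
  have hnorm : ‖E * (-4 * z)‖ = E * (4 * z) := by
    rw [show E * (-4 * z) = -(E * (4 * z)) by ring, norm_neg, Real.norm_of_nonneg (by positivity)]
  have htrace_eq : (A * E • ((8 : ℝ) • Matrix.vecMulVec y y - (4 * z) • 1)).trace =
      E * (8 * (y ⬝ᵥ A *ᵥ y) - 4 * z * A.trace) := by
    simp [Matrix.mul_sub, trace_mul_vecMulVec, Matrix.trace_sub, Matrix.trace_smul]
  have hell : θ * ‖y‖ ^ 2 ≤ y ⬝ᵥ A *ᵥ y := mul_norm_sq_le_of_mem_ellipticMatrices hA y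
  have htrace : z * A.trace ≤ z * Λ := by gcongr; exact hA.2
  have hdrift : z * ⟪y, k⟫ ≤ z * (r * ‖k‖) := by
    gcongr
    exact (real_inner_le_norm y k).trans (by gcongr)
  have hgrad : B * (z * ‖y‖) ≤ B * (z * r) := by gcongr
  have hscaled : -K * z ^ 2 + 4 * z * ⟪y, k⟫ <
      8 * (y ⬝ᵥ A *ᵥ y) - 4 * z * A.trace - B * (4 * z * ‖y‖) := by
    have hKz := hK z
    have hyz : ‖y‖ ^ 2 = r ^ 2 - z := by rw [hz_def]; ring
    rw [hyz] at hell
    linarith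
  rw [hnorm, htrace_eq]
  linarith [mul_lt_mul_of_pos_left hscaled hE]

end Barrier

section Tube

variable {ι : Type*} [Fintype ι] [DecidableEq ι] {w : Spacetime ι → ℝ} {p : Spacetime ι}
  {θ Λ B : ℝ} {c k : EuclideanSpace ℝ ι} {r t₀ t₁ : ℝ}

theorem pos_of_isSupersolutionAt_tube (hθ : 0 < θ) (hB : 0 ≤ B)
    (hw : ∀ q ∈ tube c k r t₀ t₁, ContDiffAt ℝ 2 w q)
    (hsuper : ∀ q ∈ tube c k r t₀ t₁, IsSupersolutionAt θ Λ B w q)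
    (hnonneg : ∀ q ∈ tube c k r t₀ t₁, 0 ≤ w q)
    (hbottom : ∀ q ∈ tube c k r t₀ t₁, q.2 = t₀ → 0 < w q)
    (hp : p ∈ tube c k r t₀ t₁) (hpr : ‖axisOffset c k p‖ < r) : 0 < w p := by
  have hr : 0 < r := (norm_nonneg _).trans_lt hpr
  obtain ⟨η, hη, hηw⟩ : ∃ η > 0, ∀ q ∈ tube c k r t₀ t₁ ∩ {q | q.2 = t₀}, η ≤ w q :=
    (isCompact_tube.inter_right (isClosed_eq continuous_snd continuous_const)).exists_forall_le'
      (fun q hq => (hw q hq.1).continuousAt.continuousWithinAt)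
      fun q hq => hbottom q hq.1 hq.2
  obtain ⟨K, hK⟩ := exists_isStrictSubsolutionAt_barrier (c := c) (k := k) (t₀ := t₀) Λ hθ hB hr
  have hbarrier : barrier c k r t₀ (η / r ^ 4) K p ≤ w p := by
    refine le_of_le_off_parabolicInterior hθ.le isCompact_tube hw
      (fun _ _ => contDiff_barrier.contDiffAt) hsuper
      (fun q hq => hK _ (by positivity) q hq.2) (fun q ⟨hq, hq_bdry⟩ => ?_) hp
    rcases hq.2.eq_or_lt with hlateral | hinside
    · simpa [barrier, hlateral] using hnonneg q hq
    · have hq₀ : q.2 = t₀ := by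
        by_contra hne
        exact hq_bdry (mem_parabolicInterior_tube hq (lt_of_le_of_ne' hq.1.1 hne) hinside)
      calc barrier c k r t₀ (η / r ^ 4) K q
          = η / r ^ 4 * (r ^ 2 - ‖axisOffset c k q‖ ^ 2) ^ 2 := by simp [barrier, hq₀]
        _ ≤ η / r ^ 4 * (r ^ 2) ^ 2 := by
          gcongr
          · rw [sub_nonneg]; gcongr
          · exact sub_le_self _ (sq_nonneg _)
        _ = η := by field_simp
        _ ≤ w q := hηw q ⟨hq, hq₀⟩
  refine lt_of_lt_of_le ?_ hbarrier
  have : ‖axisOffset c k p‖ ^ 2 < r ^ 2 := by gcongr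
  have := sub_pos.2 this
  unfold barrier
  positivity

end Tube

section StrongMaximumPrinciple

variable {ι : Type*} [Fintype ι] [DecidableEq ι] {w : Spacetime ι → ℝ}
  {U : Set (EuclideanSpace ℝ ι)} {x x₀ : EuclideanSpace ℝ ι} {τ₀ τ₁ t : ℝ}

/-- Positivity at `(x, τ₀)` travels to `(x₀, τ₁)` along a thin tube around the space-time segment
between these two points. -/
theorem pos_of_pos_of_segment_subset (hU : IsOpen U) (hseg : segment ℝ x x₀ ⊆ U) (hτ : τ₀ < τ₁)
    (hw : ∀ p ∈ U ×ˢ Set.Icc τ₀ τ₁, ContDiffAt ℝ 2 w p)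
    (hsuper : IsSupersolutionOn w (U ×ˢ Set.Icc τ₀ τ₁))
    (hnonneg : ∀ p ∈ U ×ˢ Set.Icc τ₀ τ₁, 0 ≤ w p) (hpos : 0 < w (x, τ₀)) :
    0 < w (x₀, τ₁) := by
  have hx : (x, τ₀) ∈ U ×ˢ Set.Icc τ₀ τ₁ :=
    ⟨hseg (left_mem_segment ℝ x x₀), Set.left_mem_Icc.2 hτ.le⟩
  obtain ⟨ρ, hρ, hρU⟩ : ∃ ρ > 0, Metric.cthickening ρ (segment ℝ x x₀) ⊆ U := by
    refine IsCompact.exists_cthickening_subset_open ?_ hU hseg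
    rw [segment_eq_image_lineMap]
    exact isCompact_Icc.image AffineMap.lineMap_continuous
  obtain ⟨σ, hσ, hσw⟩ : ∃ σ > 0, ∀ q ∈ Metric.closedBall (x, τ₀) σ, 0 < w q :=
    Metric.nhds_basis_closedBall.mem_iff.1 ((hw _ hx).continuousAt.eventually_const_lt hpos)
  set k := (τ₁ - τ₀)⁻¹ • (x₀ - x) with hk
  have htube : tube (x - τ₀ • k) k (min ρ σ) τ₀ τ₁ ⊆ U ×ˢ Set.Icc τ₀ τ₁ := fun q hq =>
    ⟨hρU (Metric.cthickening_mono (min_le_left ρ σ) _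
      (fst_mem_cthickening_of_mem_tube hτ hk hq)), hq.1⟩
  have hbottom : ∀ q ∈ tube (x - τ₀ • k) k (min ρ σ) τ₀ τ₁, q.2 = τ₀ → 0 < w q := by
    rintro q ⟨-, hq⟩ hq₀
    have hdist : dist q.1 x ≤ σ := by
      simpa [axisOffset, hq₀, dist_eq_norm] using hq.trans (min_le_right ρ σ)
    exact hσw q (by simpa [Prod.dist_eq, hq₀, hσ.le] using hdist)
  have hoffset : axisOffset (x - τ₀ • k) k (x₀, τ₁) = 0 := by
    have hτ' := (sub_pos.2 hτ).ne'
    calc axisOffset (x - τ₀ • k) k (x₀, τ₁) = x₀ - x - (τ₁ - τ₀) • k := by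
          simp only [axisOffset]
          module
      _ = 0 := by rw [hk, smul_inv_smul₀ hτ', sub_self]
  obtain ⟨θ, hθ, Λ, B, hB, hsuper_tube⟩ := hsuper _ htube isCompact_tube
  have hmin : 0 < min ρ σ := lt_min hρ hσ
  exact pos_of_isSupersolutionAt_tube hθ hB (fun q hq => hw q (htube hq)) hsuper_tube
    (fun q hq => hnonneg q (htube hq)) hbottom
    ⟨Set.right_mem_Icc.2 hτ.le, by simpa [hoffset] using hmin.le⟩ (by simpa [hoffset] using hmin)

theorem eq_zero_of_segment_subset (hU : IsOpen U) (hseg : segment ℝ x x₀ ⊆ U)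
    (hw : ∀ p ∈ U ×ˢ Set.Ioc τ₀ τ₁, ContDiffAt ℝ 2 w p)
    (hsuper : IsSupersolutionOn w (U ×ˢ Set.Ioc τ₀ τ₁))
    (hnonneg : ∀ p ∈ U ×ˢ Set.Ioc τ₀ τ₁, 0 ≤ w p) (hzero : w (x₀, τ₁) = 0)
    (ht : t ∈ Set.Ioc τ₀ τ₁) : w (x, t) = 0 := by
  have hxt : (x, t) ∈ U ×ˢ Set.Ioc τ₀ τ₁ := ⟨hseg (left_mem_segment ℝ x x₀), ht⟩
  by_contra hne
  have hearlier : ∃ s ∈ Set.Ioo τ₀ t, 0 < w (x, s) := by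
    have hcont : ContinuousAt (fun s => w (x, s)) t :=
      (hw _ hxt).continuousAt.comp (continuousAt_const.prodMk continuousAt_id)
    have hev : ∀ᶠ s in 𝓝[<] t, 0 < w (x, s) := nhdsWithin_le_nhds <|
      hcont.eventually_const_lt (lt_of_le_of_ne' (hnonneg _ hxt) hne)
    exact (Filter.Eventually.and (Ioo_mem_nhdsLT ht.1) hev).exists
  obtain ⟨s, hs, hpos⟩ := hearlier
  have hsub : U ×ˢ Set.Icc s τ₁ ⊆ U ×ˢ Set.Ioc τ₀ τ₁ :=
    Set.prod_mono_right fun r hr => ⟨hs.1.trans_le hr.1, hr.2⟩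
  exact (pos_of_pos_of_segment_subset hU hseg (hs.2.trans_le ht.2) (fun p hp => hw p (hsub hp))
    (fun T hT => hsuper T (hT.trans hsub)) (fun p hp => hnonneg p (hsub hp)) hpos).ne' hzero

theorem eqOn_zero_of_isSupersolutionOn (hU : IsOpen U) (hU_conn : IsPreconnected U)
    (hw : ∀ p ∈ U ×ˢ Set.Ioc τ₀ τ₁, ContDiffAt ℝ 2 w p)
    (hsuper : IsSupersolutionOn w (U ×ˢ Set.Ioc τ₀ τ₁))
    (hnonneg : ∀ p ∈ U ×ˢ Set.Ioc τ₀ τ₁, 0 ≤ w p) (hx₀ : x₀ ∈ U) (hzero : w (x₀, τ₁) = 0) :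
    Set.EqOn w 0 (U ×ˢ Set.Ioc τ₀ τ₁) := by
  rintro ⟨x, t⟩ ⟨hx, ht⟩
  have hfinal : w (x₀, τ₁) = 0 ↔ w (x, τ₁) = 0 := by
    refine hU_conn.induction₂ (fun y z => w (y, τ₁) = 0 ↔ w (z, τ₁) = 0)
      (fun y hy => ?_) (fun _ _ _ _ _ _ => Iff.trans) (fun _ _ _ _ => Iff.symm) hx₀ hx
    obtain ⟨ρ, hρ, hball⟩ := Metric.isOpen_iff.1 hU y hy
    filter_upwards [nhdsWithin_le_nhds (Metric.ball_mem_nhds y hρ)] with z hz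
    have hseg : segment ℝ y z ⊆ U :=
      ((convex_ball y ρ).segment_subset (Metric.mem_ball_self hρ) hz).trans hball
    have hτ₁ : τ₁ ∈ Set.Ioc τ₀ τ₁ := Set.right_mem_Ioc.2 (ht.1.trans_le ht.2)
    have hseg' : segment ℝ z y ⊆ U := segment_symm ℝ y z ▸ hseg
    exact ⟨fun h => eq_zero_of_segment_subset hU hseg' hw hsuper hnonneg h hτ₁,
      fun h => eq_zero_of_segment_subset hU hseg hw hsuper hnonneg h hτ₁⟩
  exact eq_zero_of_segment_subset hU (by simpa using hx) hw hsuper hnonneg (hfinal.1 hzero) ht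

end StrongMaximumPrinciple

section Quasilinear

open scoped Matrix.Norms.Elementwise

variable {ι : Type*} [Fintype ι] [DecidableEq ι]

/-- The quasilinear parabolic operator `∂ₜu - tr (a(Du) D²u)`. -/
def quasilinearOp (a : EuclideanSpace ℝ ι → Matrix ι ι ℝ) (u : Spacetime ι → ℝ)
    (p : Spacetime ι) : ℝ :=
  timeDeriv u p - (a (spatialGradient u p) * spatialHessian u p).trace

theorem exists_subset_ellipticMatrices {𝒦 : Set (Matrix ι ι ℝ)} (h𝒦 : IsCompact 𝒦)
    (hpos : ∀ A ∈ 𝒦, A.PosDef) : ∃ θ > 0, ∃ Λ, 𝒦 ⊆ ellipticMatrices ι θ Λ := by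
  obtain ⟨Λ, hΛ⟩ := h𝒦.bddAbove_image (f := Matrix.trace) (by fun_prop)
  obtain ⟨θ, hθ, hθ𝒦⟩ : ∃ θ > 0, ∀ x ∈ 𝒦 ×ˢ Metric.sphere (0 : EuclideanSpace ℝ ι) 1,
      θ ≤ x.2 ⬝ᵥ x.1 *ᵥ x.2 := by
    refine (h𝒦.prod (isCompact_sphere _ _)).exists_forall_le' (by fun_prop) fun x hx => ?_
    have hx₀ : x.2.ofLp ≠ 0 := by
      simpa using Metric.ne_of_mem_sphere hx.2 one_ne_zero
    simpa using (hpos _ hx.1).dotProduct_mulVec_pos hx₀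
  have hquad {A} (hA : A ∈ 𝒦) (y : EuclideanSpace ℝ ι) : θ * ‖y‖ ^ 2 ≤ y ⬝ᵥ A *ᵥ y := by
    rcases eq_or_ne y 0 with rfl | hy
    · simp
    · have hy₀ : 0 < ‖y‖ := norm_pos_iff.2 hy
      have h := hθ𝒦 (A, ‖y‖⁻¹ • y) ⟨hA, by simp [norm_smul, hy₀.ne']⟩
      simp only [WithLp.ofLp_smul, Matrix.mulVec_smul, dotProduct_smul, smul_dotProduct,
        smul_eq_mul] at h
      calc θ * ‖y‖ ^ 2 ≤ ‖y‖⁻¹ * (‖y‖⁻¹ * y ⬝ᵥ A *ᵥ y) * ‖y‖ ^ 2 := by gcongr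
        _ = y ⬝ᵥ A *ᵥ y := by field_simp
  refine ⟨θ, hθ, Λ, fun A hA => ⟨.of_dotProduct_mulVec_nonneg ?_ fun y => ?_, hΛ ⟨A, hA, rfl⟩⟩⟩
  · exact (hpos A hA).isHermitian.sub (by simp [Matrix.IsHermitian])
  · have h := dotProduct_sub_smul_one_mulVec A θ (WithLp.toLp 2 y)
    rw [star_trivial]
    exact h.symm ▸ sub_nonneg.2 (hquad hA _)

variable {a : EuclideanSpace ℝ ι → Matrix ι ι ℝ} {u v : Spacetime ι → ℝ}

/-- The difference of a sub- and a supersolution satisfies a linear equation: the drift collects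
`tr ((a(Dv) - a(Du)) D²u)`, which is controlled by `|Dv - Du|`. -/
theorem isSupersolutionOn_sub {S : Set (Spacetime ι)} (ha : LocallyLipschitz a)
    (hpos : ∀ q, (a q).PosDef) (hu : ∀ p ∈ S, ContDiffAt ℝ 2 u p)
    (hv : ∀ p ∈ S, ContDiffAt ℝ 2 v p)
    (hop : ∀ p ∈ S, quasilinearOp a u p ≤ quasilinearOp a v p) :
    IsSupersolutionOn (v - u) S := by
  intro T hTS hT
  replace hu := fun p hp => hu p (hTS hp)
  replace hv := fun p hp => hv p (hTS hp)
  have hDu : IsCompact (spatialGradient u '' T) := hT.image_of_continuousOn fun p hp =>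
    (continuousAt_spatialGradient (hu p hp)).continuousWithinAt
  have hDv : IsCompact (spatialGradient v '' T) := hT.image_of_continuousOn fun p hp =>
    (continuousAt_spatialGradient (hv p hp)).continuousWithinAt
  obtain ⟨θ, hθ, Λ, helliptic⟩ := exists_subset_ellipticMatrices (hDv.image ha.continuous)
    (by rintro _ ⟨q, -, rfl⟩; exact hpos q)
  obtain ⟨L, hL⟩ := ha.locallyLipschitzOn.exists_lipschitzOnWith_of_compact (hDu.union hDv)
  obtain ⟨M, hM⟩ := hT.exists_bound_of_continuousOn fun p hp =>
    (continuousAt_spatialHessian (hu p hp)).continuousWithinAt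
  refine ⟨θ, hθ, Λ, Fintype.card ι ^ 2 * (L * max M 0), by positivity, fun p hp =>
    ⟨a (spatialGradient v p), helliptic ⟨_, ⟨p, hp, rfl⟩, rfl⟩, ?_⟩⟩
  have hu₁ : DifferentiableAt ℝ u p := (hu p hp).differentiableAt (by simp)
  have hv₁ : DifferentiableAt ℝ v p := (hv p hp).differentiableAt (by simp)
  have hdrift : -(Fintype.card ι ^ 2 * (L * max M 0) * ‖spatialGradient v p - spatialGradient u p‖)
      ≤ ((a (spatialGradient v p) - a (spatialGradient u p)) * spatialHessian u p).trace := by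
    have hlip : ‖a (spatialGradient v p) - a (spatialGradient u p)‖ ≤
        L * ‖spatialGradient v p - spatialGradient u p‖ := by
      simpa [dist_eq_norm] using
        hL.dist_le_mul _ (.inr ⟨p, hp, rfl⟩) _ (.inl ⟨p, hp, rfl⟩)
    refine neg_le_of_abs_le ((abs_trace_mul_le _ _).trans ?_)
    calc _ ≤ Fintype.card ι ^ 2 *
          (L * ‖spatialGradient v p - spatialGradient u p‖ * max M 0) := by
          gcongr
          exact (hM p hp).trans (le_max_left _ _)
      _ = _ := by ring
  have hop_p := hop p (hTS hp)
  rw [quasilinearOp, quasilinearOp] at hop_p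
  rw [timeDeriv_sub hv₁ hu₁, spatialGradient_sub hv₁ hu₁, spatialHessian_sub (hv p hp) (hu p hp),
    Matrix.mul_sub, Matrix.trace_sub]
  rw [Matrix.sub_mul, Matrix.trace_sub] at hdrift
  linarith

theorem eqOn_of_quasilinearOp_le {U : Set (EuclideanSpace ℝ ι)}
    {x₀ : EuclideanSpace ℝ ι} {τ₀ τ₁ : ℝ} (hU : IsOpen U) (hU_conn : IsPreconnected U)
    (ha : LocallyLipschitz a) (hpos : ∀ q, (a q).PosDef)
    (hu : ∀ p ∈ U ×ˢ Set.Ioc τ₀ τ₁, ContDiffAt ℝ 2 u p)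
    (hv : ∀ p ∈ U ×ˢ Set.Ioc τ₀ τ₁, ContDiffAt ℝ 2 v p)
    (hop : ∀ p ∈ U ×ˢ Set.Ioc τ₀ τ₁, quasilinearOp a u p ≤ quasilinearOp a v p)
    (hle : ∀ p ∈ U ×ˢ Set.Ioc τ₀ τ₁, u p ≤ v p)
    (hx₀ : x₀ ∈ U) (heq : u (x₀, τ₁) = v (x₀, τ₁)) : Set.EqOn u v (U ×ˢ Set.Ioc τ₀ τ₁) := by
  have hzero : Set.EqOn (v - u) 0 (U ×ˢ Set.Ioc τ₀ τ₁) :=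
    eqOn_zero_of_isSupersolutionOn hU hU_conn (fun p hp => (hv p hp).sub (hu p hp))
      (isSupersolutionOn_sub ha hpos hu hv hop) (fun p hp => sub_nonneg.2 (hle p hp)) hx₀
      (sub_eq_zero.2 heq.symm)
  exact fun p hp => (sub_eq_zero.1 (hzero hp)).symm

end Quasilinear

section MeanCurvatureFlow

open scoped Matrix.Norms.Elementwise

variable {ι : Type*} [Fintype ι] [DecidableEq ι]

/-- The coefficients `δᵢⱼ - qᵢ qⱼ / (1 + |q|²)` of graphical mean curvature flow. -/
def mcfMatrix (q : EuclideanSpace ℝ ι) : Matrix ι ι ℝ :=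
  1 - (1 + ‖q‖ ^ 2)⁻¹ • Matrix.vecMulVec q q

theorem dotProduct_mcfMatrix_mulVec (q y : EuclideanSpace ℝ ι) :
    y ⬝ᵥ mcfMatrix q *ᵥ y = ‖y‖ ^ 2 - (1 + ‖q‖ ^ 2)⁻¹ * ⟪q, y⟫ ^ 2 := by
  have hinner : ⟪q, y⟫ = y ⬝ᵥ q := rfl
  have hnorm : ‖y‖ ^ 2 = y ⬝ᵥ y := (real_inner_self_eq_norm_sq y).symm
  rw [hinner, hnorm, mcfMatrix, Matrix.sub_mulVec, Matrix.smul_mulVec, Matrix.one_mulVec,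
    Matrix.vecMulVec_mulVec, dotProduct_sub, dotProduct_smul, op_smul_eq_smul, dotProduct_smul,
    dotProduct_comm q.ofLp, smul_eq_mul, smul_eq_mul]
  ring

theorem posDef_mcfMatrix (q : EuclideanSpace ℝ ι) : (mcfMatrix q).PosDef := by
  refine .of_dotProduct_mulVec_pos ?_ fun y hy => ?_
  · ext i j
    simp [mcfMatrix, Matrix.one_apply, Matrix.vecMulVec_apply, mul_comm, eq_comm]
  · have hq : (0 : ℝ) < 1 + ‖q‖ ^ 2 := by positivity
    have hy₀ : 0 < ‖WithLp.toLp 2 y‖ := by simpa using hy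
    have hCS : ⟪q, WithLp.toLp 2 y⟫ ^ 2 ≤ ‖q‖ ^ 2 * ‖WithLp.toLp 2 y‖ ^ 2 := by
      rw [← mul_pow]
      exact sq_le_sq' (neg_le_of_abs_le (abs_real_inner_le_norm q _)) (real_inner_le_norm q _)
    rw [star_trivial]
    refine (dotProduct_mcfMatrix_mulVec q (WithLp.toLp 2 y)).symm ▸ ?_
    rw [sub_pos, inv_mul_lt_iff₀ hq]
    linarith [pow_pos hy₀ 2]

theorem locallyLipschitz_mcfMatrix : LocallyLipschitz (mcfMatrix (ι := ι)) := by
  refine ContDiff.locallyLipschitz (𝕂 := ℝ) (contDiff_pi.2 fun i => contDiff_pi.2 fun j => ?_)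
  have hinv : ContDiff ℝ 1 fun q : EuclideanSpace ℝ ι => (1 + ‖q‖ ^ 2)⁻¹ :=
    (contDiff_const.add (contDiff_norm_sq ℝ)).inv fun q => by positivity
  have hcoord (l : ι) : ContDiff ℝ 1 fun q : EuclideanSpace ℝ ι => q l := by fun_prop
  exact contDiff_const.sub (hinv.mul ((hcoord i).mul (hcoord j)))

theorem strong_maximum_principle_graphical_MCF_general {u v : Spacetime ι → ℝ}
    {U : Set (EuclideanSpace ℝ ι)} {x₀ : EuclideanSpace ℝ ι} {τ₀ τ₁ : ℝ}
    (hU : IsOpen U) (hU_conn : IsPreconnected U)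
    (hu : ∀ p ∈ U ×ˢ Set.Ioc τ₀ τ₁, ContDiffAt ℝ 2 u p)
    (hv : ∀ p ∈ U ×ˢ Set.Ioc τ₀ τ₁, ContDiffAt ℝ 2 v p)
    (hop : ∀ p ∈ U ×ˢ Set.Ioc τ₀ τ₁, quasilinearOp mcfMatrix u p ≤ quasilinearOp mcfMatrix v p)
    (hle : ∀ p ∈ U ×ˢ Set.Ioc τ₀ τ₁, u p ≤ v p)
    (hx₀ : x₀ ∈ U) (heq : u (x₀, τ₁) = v (x₀, τ₁)) : Set.EqOn u v (U ×ˢ Set.Ioc τ₀ τ₁) :=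
  eqOn_of_quasilinearOp_le hU hU_conn locallyLipschitz_mcfMatrix posDef_mcfMatrix
    hu hv hop hle hx₀ heq

end MeanCurvatureFlow

section Coordinates

/-- The point of space-time with coordinates `(x₁, x₂, t)`. -/
def spacetimePoint (x₁ x₂ t : ℝ) : Spacetime (Fin 2) := (!₂[x₁, x₂], t)

/-- A function of the coordinates `(x₁, x₂, t)`, viewed as a function on space-time. -/
def onSpacetime (f : ℝ → ℝ → ℝ → ℝ) (p : Spacetime (Fin 2)) : ℝ := f (p.1 0) (p.1 1) p.2

variable {f : ℝ → ℝ → ℝ → ℝ} {g : Spacetime (Fin 2) → ℝ} {x₁ x₂ t : ℝ}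

theorem spacetimePoint_coordinates (p : Spacetime (Fin 2)) :
    spacetimePoint (p.1 0) (p.1 1) p.2 = p := by
  ext i
  · fin_cases i <;> rfl
  · rfl

theorem hasDerivAt_spacetimePoint_fst :
    HasDerivAt (fun s => spacetimePoint s x₂ t) (spatialBasis 0) x₁ := by
  have hline : (fun s => spacetimePoint s x₂ t) =
      fun s : ℝ => s • spatialBasis 0 + spacetimePoint 0 x₂ t := by
    ext s i
    · fin_cases i <;> simp [spacetimePoint, spatialBasis]
    · simp [spacetimePoint, spatialBasis]
  rw [hline]
  simpa using ((hasDerivAt_id x₁).smul_const (spatialBasis (0 : Fin 2))).add_const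
    (spacetimePoint 0 x₂ t)

theorem hasDerivAt_spacetimePoint_snd :
    HasDerivAt (fun s => spacetimePoint x₁ s t) (spatialBasis 1) x₂ := by
  have hline : (fun s => spacetimePoint x₁ s t) =
      fun s : ℝ => s • spatialBasis 1 + spacetimePoint x₁ 0 t := by
    ext s i
    · fin_cases i <;> simp [spacetimePoint, spatialBasis]
    · simp [spacetimePoint, spatialBasis]
  rw [hline]
  simpa using ((hasDerivAt_id x₂).smul_const (spatialBasis (1 : Fin 2))).add_const
    (spacetimePoint x₁ 0 t)

theorem hasDerivAt_spacetimePoint_time :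
    HasDerivAt (fun s => spacetimePoint x₁ x₂ s) (0, 1) t :=
  (hasDerivAt_const t _).prodMk (hasDerivAt_id t)

theorem pd1_eq (hf : Differentiable ℝ (onSpacetime f)) :
    pd1 f x₁ x₂ t = fderiv ℝ (onSpacetime f) (spacetimePoint x₁ x₂ t) (spatialBasis 0) :=
  ((hf _).hasFDerivAt.comp_hasDerivAt x₁ hasDerivAt_spacetimePoint_fst).deriv

theorem pd2_eq (hf : Differentiable ℝ (onSpacetime f)) :
    pd2 f x₁ x₂ t = fderiv ℝ (onSpacetime f) (spacetimePoint x₁ x₂ t) (spatialBasis 1) :=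
  ((hf _).hasFDerivAt.comp_hasDerivAt x₂ hasDerivAt_spacetimePoint_snd).deriv

theorem pdt_eq (hf : Differentiable ℝ (onSpacetime f)) :
    pdt f x₁ x₂ t = timeDeriv (onSpacetime f) (spacetimePoint x₁ x₂ t) :=
  ((hf _).hasFDerivAt.comp_hasDerivAt t hasDerivAt_spacetimePoint_time).deriv

theorem pd11_eq (hf : ContDiff ℝ 2 (onSpacetime f)) :
    pd11 f x₁ x₂ t = spatialHessian (onSpacetime f) (spacetimePoint x₁ x₂ t) 0 0 := by
  simp only [pd11, pd1_eq (hf.differentiable (by simp))]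
  exact ((hasFDerivAt_fderiv_apply hf.contDiffAt (spatialBasis 0)).comp_hasDerivAt x₁
    hasDerivAt_spacetimePoint_fst).deriv

theorem pd12_eq (hf : ContDiff ℝ 2 (onSpacetime f)) :
    pd12 f x₁ x₂ t = spatialHessian (onSpacetime f) (spacetimePoint x₁ x₂ t) 1 0 := by
  simp only [pd12, pd1_eq (hf.differentiable (by simp))]
  exact ((hasFDerivAt_fderiv_apply hf.contDiffAt (spatialBasis 0)).comp_hasDerivAt x₂
    hasDerivAt_spacetimePoint_snd).deriv

theorem pd21_eq (hf : ContDiff ℝ 2 (onSpacetime f)) :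
    pd21 f x₁ x₂ t = spatialHessian (onSpacetime f) (spacetimePoint x₁ x₂ t) 0 1 := by
  simp only [pd21, pd2_eq (hf.differentiable (by simp))]
  exact ((hasFDerivAt_fderiv_apply hf.contDiffAt (spatialBasis 1)).comp_hasDerivAt x₁
    hasDerivAt_spacetimePoint_fst).deriv

theorem pd22_eq (hf : ContDiff ℝ 2 (onSpacetime f)) :
    pd22 f x₁ x₂ t = spatialHessian (onSpacetime f) (spacetimePoint x₁ x₂ t) 1 1 := by
  simp only [pd22, pd2_eq (hf.differentiable (by simp))]
  exact ((hasFDerivAt_fderiv_apply hf.contDiffAt (spatialBasis 1)).comp_hasDerivAt x₂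
    hasDerivAt_spacetimePoint_snd).deriv

theorem contDiff_two_onSpacetime {S : Set (ℝ × ℝ × ℝ)} (hf : IsGraphicalMCF S f) :
    ContDiff ℝ 2 (onSpacetime f) :=
  (hf.1.of_le (WithTop.coe_le_coe.2 le_top)).comp
    (f := fun p : Spacetime (Fin 2) => (p.1 0, p.1 1, p.2)) (by fun_prop)

theorem quasilinearOp_mcfMatrix_onSpacetime {S : Set (ℝ × ℝ × ℝ)} (hf : IsGraphicalMCF S f)
    {p : Spacetime (Fin 2)} (hp : (p.1 0, p.1 1, p.2) ∈ S) :
    quasilinearOp mcfMatrix (onSpacetime f) p = 0 := by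
  have hf₂ : ContDiff ℝ 2 (onSpacetime f) := contDiff_two_onSpacetime hf
  have hf₁ : Differentiable ℝ (onSpacetime f) := hf₂.differentiable (by simp)
  have hpde := hf.2 _ hp
  simp only [gradQ, pd1_eq hf₁, pd2_eq hf₁, pdt_eq hf₁, pd11_eq hf₂, pd12_eq hf₂, pd21_eq hf₂,
    pd22_eq hf₂, spacetimePoint_coordinates] at hpde
  rw [quasilinearOp, hpde, sub_eq_zero]
  simp only [Fin.isValue, zero_sub, neg_mul, mcfMatrix, spatialGradient,
    EuclideanSpace.real_norm_sq_eq, Fin.sum_univ_two, Matrix.trace_fin_two, Matrix.mul_apply,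
    Matrix.sub_apply, Matrix.smul_apply, Matrix.vecMulVec_apply, smul_eq_mul,
    Matrix.one_apply_eq, ne_eq, zero_ne_one, not_false_eq_true, Matrix.one_apply_ne, one_ne_zero]
  ring

theorem mem_ball_prod_Ioc_iff_mem_pball {δ : ℝ} (hδ : 0 < δ) {p : Spacetime (Fin 2)} :
    p ∈ Metric.ball 0 δ ×ˢ Set.Ioc (-δ ^ 2) 0 ↔ (p.1 0, p.1 1, p.2) ∈ pball δ := by
  rw [Set.mem_prod, mem_ball_zero_iff, ← sq_lt_sq₀ (norm_nonneg _) hδ.le,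
    EuclideanSpace.real_norm_sq_eq, Fin.sum_univ_two]
  rfl

end Coordinates

/-- Strong maximum principle for graphical mean curvature flow: if `u` and `v` are
graphical solutions of the mean curvature flow in `P(0,δ)` with `u(0,0) = v(0,0)`
and `u ≤ v` everywhere in `P(0,δ)`, then `u = v` in `P(0,δ)`. -/
theorem strong_maximum_principle_graphical_MCF
    (δ : ℝ) (hδ : 0 < δ)
    (u v : ℝ → ℝ → ℝ → ℝ)
    (hu : IsGraphicalMCF (pball δ) u) (hv : IsGraphicalMCF (pball δ) v)
    (heq : u 0 0 0 = v 0 0 0)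
    (hle : ∀ p ∈ pball δ, u p.1 p.2.1 p.2.2 ≤ v p.1 p.2.1 p.2.2) :
    ∀ p ∈ pball δ, u p.1 p.2.1 p.2.2 = v p.1 p.2.1 p.2.2 := by
  rintro ⟨x₁, x₂, t⟩ hp
  have hop : ∀ q ∈ Metric.ball 0 δ ×ˢ Set.Ioc (-δ ^ 2) 0,
      quasilinearOp mcfMatrix (onSpacetime u) q ≤ quasilinearOp mcfMatrix (onSpacetime v) q := by
    intro q hq
    have hq' := (mem_ball_prod_Ioc_iff_mem_pball hδ).1 hq
    rw [quasilinearOp_mcfMatrix_onSpacetime hu hq', quasilinearOp_mcfMatrix_onSpacetime hv hq']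
  have hEqOn : Set.EqOn (onSpacetime u) (onSpacetime v) (Metric.ball 0 δ ×ˢ Set.Ioc (-δ ^ 2) 0) :=
    strong_maximum_principle_graphical_MCF_general Metric.isOpen_ball
      (convex_ball 0 δ).isPreconnected (fun _ _ => (contDiff_two_onSpacetime hu).contDiffAt)
      (fun _ _ => (contDiff_two_onSpacetime hv).contDiffAt) hop
      (fun q hq => hle _ ((mem_ball_prod_Ioc_iff_mem_pball hδ).1 hq)) (Metric.mem_ball_self hδ) heq
  exact hEqOn ((mem_ball_prod_Ioc_iff_mem_pball hδ (p := spacetimePoint x₁ x₂ t)).2 hp)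
end
end

section
/- Two-sided bound for the shrinker profile: let b > 0 and let u : [2√2, ∞) → ℝ be a differentiable function with u(z) > √2 for all z, satisfying the ODE u′(z) = (w(z)/(2 z u(z)))·(u(z)² − 2), where w : [2√2, ∞) → ℝ satisfies 2 ≤ w(z) ≤ 2 + 16/z² for all z, and suppose u has asymptotic slope b in the sense that u(z)/z → b as z → ∞. Then for every z ≥ 2√2 one has 2 + e^{−1} b² z² ≤ u(z)² ≤ 2 + b² z². -/
open Filter

/-!
The quotient `F = (u² - 2) / z²` turns the nonlinear equation for `u` into the linear one
`F′ = ((w - 2) / z) F`, whose rate lies between `0` and `16 / z³ = -(8 / z²)′`. Moreover `F → b²`,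
so `F` is nowhere negative: to climb from a negative value to its limit it would have to vanish,
while `F²` is nondecreasing. Hence `F` is nondecreasing and `F exp (8 / z²)` is nonincreasing,
and both tend to `b²`. Finally `8 / z² ≤ 1` for `z ≥ 2√2`.
-/

section LinearEquation

open Set Topology

theorem le_of_monotoneOn_Ici_of_tendsto {α β : Type*} [SemilatticeSup α] [Preorder β]
    [TopologicalSpace β] [ClosedIciTopology β] {f : α → β} {a z : α} {L : β}
    (hf : MonotoneOn f (Ici a)) (hL : Tendsto f atTop (𝓝 L)) (hz : z ∈ Ici a) : f z ≤ L := by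
  have : Nonempty α := ⟨a⟩
  refine ge_of_tendsto hL ?_
  filter_upwards [eventually_ge_atTop z] with x hx
  exact hf hz (le_trans hz hx) hx

theorem monotoneOn_of_forall_hasDerivWithinAt_nonneg {f f' : ℝ → ℝ} {D : Set ℝ}
    (hD : Convex ℝ D) (hf : ∀ z ∈ D, HasDerivWithinAt f (f' z) D z)
    (hf' : ∀ z ∈ D, 0 ≤ f' z) : MonotoneOn f D :=
  monotoneOn_of_hasDerivWithinAt_nonneg hD
    (fun z hz => (hf z hz).continuousWithinAt)
    (fun z hz => (hf z (interior_subset hz)).mono interior_subset)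
    (fun z hz => hf' z (interior_subset hz))

variable {f g φ ψ : ℝ → ℝ} {a L : ℝ}

theorem nonneg_of_monotoneOn_sq_of_tendsto (hcont : ContinuousOn f (Ici a))
    (hsq : MonotoneOn (fun z => f z ^ 2) (Ici a)) (hL : Tendsto f atTop (𝓝 L)) (hL0 : 0 ≤ L)
    {z : ℝ} (hz : z ∈ Ici a) : 0 ≤ f z := by
  by_contra! hneg
  have hfz : 0 < f z ^ 2 := sq_pos_of_neg hneg
  have hLsq := le_of_monotoneOn_Ici_of_tendsto hsq (hL.pow 2) hz
  have hLpos : 0 < L := hL0.lt_of_ne' (sq_pos_iff.mp (hfz.trans_le hLsq))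
  obtain ⟨y, hfy, hzy⟩ := ((hL.eventually_const_lt hLpos).and (eventually_ge_atTop z)).exists
  obtain ⟨x, hx, hfx⟩ := intermediate_value_Icc hzy
    (hcont.mono fun t ht => hz.trans ht.1) ⟨hneg.le, hfy.le⟩
  have hle : f z ^ 2 ≤ f x ^ 2 := hsq hz (hz.trans hx.1) hx.1
  rw [hfx, zero_pow two_ne_zero] at hle
  exact hfz.not_ge hle

theorem nonneg_of_hasDerivWithinAt_mul_of_tendsto
    (hf : ∀ z ∈ Ici a, HasDerivWithinAt f (g z * f z) (Ici a) z) (hg : ∀ z ∈ Ici a, 0 ≤ g z)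
    (hL : Tendsto f atTop (𝓝 L)) (hL0 : 0 ≤ L) {z : ℝ} (hz : z ∈ Ici a) : 0 ≤ f z := by
  have hsq : ∀ z ∈ Ici a,
      HasDerivWithinAt (fun x => f x ^ 2) (2 * g z * f z ^ 2) (Ici a) z := fun z hz =>
    ((hf z hz).fun_pow 2).congr_deriv (by push_cast; ring)
  have hmono := monotoneOn_of_forall_hasDerivWithinAt_nonneg (convex_Ici a) hsq fun z hz =>
    mul_nonneg (mul_nonneg zero_le_two (hg z hz)) (sq_nonneg (f z))
  exact nonneg_of_monotoneOn_sq_of_tendsto (fun z hz => (hf z hz).continuousWithinAt)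
    hmono hL hL0 hz

theorem le_of_hasDerivWithinAt_mul_of_tendsto
    (hf : ∀ z ∈ Ici a, HasDerivWithinAt f (g z * f z) (Ici a) z) (hg : ∀ z ∈ Ici a, 0 ≤ g z)
    (hL : Tendsto f atTop (𝓝 L)) (hL0 : 0 ≤ L) {z : ℝ} (hz : z ∈ Ici a) : f z ≤ L :=
  le_of_monotoneOn_Ici_of_tendsto
    (monotoneOn_of_forall_hasDerivWithinAt_nonneg (convex_Ici a) hf fun x hx =>
      mul_nonneg (hg x hx) (nonneg_of_hasDerivWithinAt_mul_of_tendsto hf hg hL hL0 hx)) hL hz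

theorem exp_neg_mul_le_of_hasDerivWithinAt_mul_of_tendsto
    (hf : ∀ z ∈ Ici a, HasDerivWithinAt f (g z * f z) (Ici a) z) (hg : ∀ z ∈ Ici a, 0 ≤ g z)
    (hL : Tendsto f atTop (𝓝 L)) (hL0 : 0 ≤ L)
    (hφ : ∀ z ∈ Ici a, HasDerivWithinAt φ (-ψ z) (Ici a) z) (hgψ : ∀ z ∈ Ici a, g z ≤ ψ z)
    (hφ0 : Tendsto φ atTop (𝓝 0)) {z : ℝ} (hz : z ∈ Ici a) : Real.exp (-φ z) * L ≤ f z := by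
  have hderiv : ∀ z ∈ Ici a, HasDerivWithinAt (fun x => -(f x * Real.exp (φ x)))
      ((ψ z - g z) * (f z * Real.exp (φ z))) (Ici a) z := fun z hz =>
    ((hf z hz).fun_mul (hφ z hz).exp).fun_neg.congr_deriv (by ring)
  have hmono := monotoneOn_of_forall_hasDerivWithinAt_nonneg (convex_Ici a) hderiv fun z hz =>
    mul_nonneg (sub_nonneg.mpr (hgψ z hz))
      (mul_nonneg (nonneg_of_hasDerivWithinAt_mul_of_tendsto hf hg hL hL0 hz)
        (Real.exp_nonneg _))
  have hlim : Tendsto (fun x => -(f x * Real.exp (φ x))) atTop (𝓝 (-L)) := by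
    simpa only [Real.exp_zero, mul_one] using (hL.mul hφ0.rexp).neg
  have hle := le_of_monotoneOn_Ici_of_tendsto hmono hlim hz
  rwa [neg_le_neg_iff, ← inv_mul_le_iff₀' (Real.exp_pos _), ← Real.exp_neg] at hle

end LinearEquation

section Profile

open Set Topology

theorem tendsto_const_div_pow_atTop (c : ℝ) {n : ℕ} (hn : n ≠ 0) :
    Tendsto (fun z : ℝ => c / z ^ n) atTop (𝓝 0) :=
  (tendsto_pow_atTop hn).const_div_atTop c

theorem hasDerivWithinAt_const_div_sq (c : ℝ) {s : Set ℝ} {z : ℝ} (hz : z ≠ 0) :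
    HasDerivWithinAt (fun x : ℝ => c / x ^ 2) (-(2 * c / z ^ 3)) s z := by
  refine ((hasDerivWithinAt_const z s c).fun_div ((hasDerivWithinAt_id z s).fun_pow 2)
    (pow_ne_zero 2 hz)).congr_deriv ?_
  simp only [id]
  field_simp
  push_cast
  ring

theorem hasDerivWithinAt_sq_sub_div_sq {u : ℝ → ℝ} {s : Set ℝ} {z c r : ℝ}
    (hz : z ≠ 0) (hu : u z ≠ 0)
    (h : HasDerivWithinAt u (r / (2 * z * u z) * (u z ^ 2 - c)) s z) :
    HasDerivWithinAt (fun x => (u x ^ 2 - c) / x ^ 2)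
      ((r - 2) / z * ((u z ^ 2 - c) / z ^ 2)) s z := by
  refine (((h.fun_pow 2).sub_const c).fun_div ((hasDerivWithinAt_id z s).fun_pow 2)
    (pow_ne_zero 2 hz)).congr_deriv ?_
  simp only [id]
  field_simp
  push_cast
  ring

theorem tendsto_sq_sub_div_sq_atTop {u : ℝ → ℝ} {b : ℝ} (c : ℝ)
    (hu : Tendsto (fun z => u z / z) atTop (𝓝 b)) :
    Tendsto (fun z => (u z ^ 2 - c) / z ^ 2) atTop (𝓝 (b ^ 2)) := by
  simpa only [sub_zero, div_pow, ← sub_div] using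
    (hu.pow 2).sub (tendsto_const_div_pow_atTop c two_ne_zero)

theorem inv_exp_one_le_exp_neg_div {x y : ℝ} (hy : 0 ≤ y) (hxy : x ≤ y) :
    (Real.exp 1)⁻¹ ≤ Real.exp (-(x / y)) := by
  rw [← Real.exp_neg, Real.exp_le_exp, neg_le_neg_iff]
  exact div_le_one_of_le₀ hxy hy

theorem shrinker_profile_two_sided_bound_general {a b c k : ℝ} {u w : ℝ → ℝ} (ha : 0 < a)
    (hu : ∀ z ∈ Ici a, u z ≠ 0) (hw : ∀ z ∈ Ici a, 2 ≤ w z ∧ w z ≤ 2 + 2 * k / z ^ 2)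
    (hode : ∀ z ∈ Ici a,
      HasDerivWithinAt u (w z / (2 * z * u z) * (u z ^ 2 - c)) (Ici a) z)
    (hslope : Tendsto (fun z => u z / z) atTop (𝓝 b)) {z : ℝ} (hz : z ∈ Ici a) :
    c + Real.exp (-(k / z ^ 2)) * b ^ 2 * z ^ 2 ≤ u z ^ 2 ∧ u z ^ 2 ≤ c + b ^ 2 * z ^ 2 := by
  have hpos : ∀ x ∈ Ici a, 0 < x := fun x hx => ha.trans_le hx
  have hF := fun x hx => hasDerivWithinAt_sq_sub_div_sq (hpos x hx).ne' (hu x hx) (hode x hx)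
  have hFlim := tendsto_sq_sub_div_sq_atTop c hslope
  have hrate_nonneg : ∀ x ∈ Ici a, 0 ≤ (w x - 2) / x := fun x hx =>
    div_nonneg (sub_nonneg.mpr (hw x hx).1) (hpos x hx).le
  have hrate_le : ∀ x ∈ Ici a, (w x - 2) / x ≤ 2 * k / x ^ 3 := fun x hx => by
    rw [pow_succ, ← div_div]
    exact div_le_div_of_nonneg_right (sub_le_iff_le_add'.mpr (hw x hx).2) (hpos x hx).le
  have hupper := le_of_hasDerivWithinAt_mul_of_tendsto hF hrate_nonneg hFlim (sq_nonneg b) hz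
  have hlower := exp_neg_mul_le_of_hasDerivWithinAt_mul_of_tendsto hF hrate_nonneg hFlim
    (sq_nonneg b) (fun x hx => hasDerivWithinAt_const_div_sq k (hpos x hx).ne') hrate_le
    (tendsto_const_div_pow_atTop k two_ne_zero) hz
  have hz2 : 0 < z ^ 2 := pow_pos (hpos z hz) 2
  rw [le_div_iff₀ hz2] at hlower
  rw [div_le_iff₀ hz2] at hupper
  exact ⟨by linarith, by linarith⟩

end Profile

/-- Two-sided bound for the shrinker profile: if `u > √2` on `[2√2, ∞)` satisfies
the ODE `u′ = (w/(2zu))(u² - 2)` with `2 ≤ w(z) ≤ 2 + 16/z²`, and `u(z)/z → b > 0`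
as `z → ∞`, then `2 + e⁻¹ b² z² ≤ u(z)² ≤ 2 + b² z²` for all `z ≥ 2√2`. -/
theorem shrinker_profile_two_sided_bound
    (b : ℝ) (hb : 0 < b) (u w : ℝ → ℝ)
    (hu_gt : ∀ z ∈ Set.Ici (2 * Real.sqrt 2), Real.sqrt 2 < u z)
    (hw : ∀ z ∈ Set.Ici (2 * Real.sqrt 2), 2 ≤ w z ∧ w z ≤ 2 + 16 / z ^ 2)
    (hode : ∀ z ∈ Set.Ici (2 * Real.sqrt 2),
      HasDerivWithinAt u (w z / (2 * z * u z) * ((u z) ^ 2 - 2))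
        (Set.Ici (2 * Real.sqrt 2)) z)
    (hslope : Tendsto (fun z => u z / z) atTop (nhds b)) :
    ∀ z ∈ Set.Ici (2 * Real.sqrt 2),
      2 + (Real.exp 1)⁻¹ * b ^ 2 * z ^ 2 ≤ (u z) ^ 2 ∧ (u z) ^ 2 ≤ 2 + b ^ 2 * z ^ 2 := by
  intro z hz
  obtain ⟨hlower, hupper⟩ := shrinker_profile_two_sided_bound_general (k := 8) (by positivity)
    (fun x hx => ((Real.sqrt_nonneg 2).trans_lt (hu_gt x hx)).ne') (by norm_num1; exact hw)
    hode hslope hz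
  have hz8 : 8 ≤ z ^ 2 := by
    calc (8 : ℝ) = (2 * √2) ^ 2 := by rw [mul_pow, Real.sq_sqrt zero_le_two]; norm_num
      _ ≤ z ^ 2 := pow_le_pow_left₀ (by positivity) hz 2
  exact ⟨hlower.trans' (by gcongr; exact inv_exp_one_le_exp_neg_div (sq_nonneg z) hz8), hupper⟩
end

section
/- Inner barrier profile estimate: let a ≥ 8 and let u : [√a, a] → ℝ be continuous with 0 < u(z) < √2 for all z ∈ [√a, a), u(a) = 0, and differentiable on [√a, a) with u′(z) = (w(z)/(2 z u(z)))·(u(z)² − 2), where w satisfies 2 ≤ w(z) ≤ 2 + 16/z² for all z. Then u(√a)² ≥ 2 − 2/a. -/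
/-!
Put `r(z) = (2 - u(z)²) / z²`. The differential equation becomes `r′ = ((w - 2) / z) r`, a linear
equation with nonnegative coefficient, so `r²` is nondecreasing. Since `r(a) = 2 / a² ≥ 0`, a
negative value of `r` would force a later zero, contradicting the growth of `r²`; hence `r ≥ 0`, so
`r` itself is nondecreasing, and comparing `z = √a` with `z = a` gives the bound.
-/

open Set

section LinearGrowth

variable {a b : ℝ} {r k : ℝ → ℝ}

theorem monotoneOn_sq_of_hasDerivAt_mul_self (hcont : ContinuousOn r (Icc b a))
    (hk : ∀ z ∈ Ioo b a, 0 ≤ k z) (hr : ∀ z ∈ Ioo b a, HasDerivAt r (k z * r z) z) :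
    MonotoneOn (fun z ↦ r z ^ 2) (Icc b a) := by
  have hderiv : ∀ z ∈ Ioo b a, HasDerivAt (fun z ↦ r z ^ 2) (2 * k z * r z ^ 2) z :=
    fun z hz ↦ ((hr z hz).fun_pow 2).congr_deriv (by push_cast; ring)
  refine monotoneOn_of_hasDerivWithinAt_nonneg (f' := fun z ↦ 2 * k z * r z ^ 2)
    (convex_Icc b a) (hcont.pow 2) ?_ ?_ <;> rw [interior_Icc]
  · exact fun z hz ↦ (hderiv z hz).hasDerivWithinAt
  · exact fun z hz ↦ mul_nonneg (mul_nonneg zero_le_two (hk z hz)) (sq_nonneg _)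

theorem nonneg_of_hasDerivAt_mul_self (hcont : ContinuousOn r (Icc b a))
    (hk : ∀ z ∈ Ioo b a, 0 ≤ k z) (hr : ∀ z ∈ Ioo b a, HasDerivAt r (k z * r z) z)
    (hra : 0 ≤ r a) {z : ℝ} (hz : z ∈ Icc b a) : 0 ≤ r z := by
  by_contra! hneg
  obtain ⟨t, ht, hrt⟩ : ∃ t ∈ Icc z a, r t = 0 :=
    intermediate_value_Icc hz.2 (hcont.mono (Icc_subset_Icc_left hz.1)) ⟨hneg.le, hra⟩
  have hsq : r z ^ 2 ≤ r t ^ 2 :=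
    monotoneOn_sq_of_hasDerivAt_mul_self hcont hk hr hz ⟨hz.1.trans ht.1, ht.2⟩ ht.1
  have hsq_pos : 0 < r z ^ 2 := sq_pos_of_neg hneg
  simp only [hrt, zero_pow two_ne_zero] at hsq
  exact hsq_pos.not_ge hsq

theorem monotoneOn_of_hasDerivAt_mul_self (hcont : ContinuousOn r (Icc b a))
    (hk : ∀ z ∈ Ioo b a, 0 ≤ k z) (hr : ∀ z ∈ Ioo b a, HasDerivAt r (k z * r z) z)
    (hra : 0 ≤ r a) : MonotoneOn r (Icc b a) := by
  have hnonneg : ∀ z ∈ Icc b a, 0 ≤ r z :=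
    fun _ hz ↦ nonneg_of_hasDerivAt_mul_self hcont hk hr hra hz
  intro x hx y hy hxy
  exact (sq_le_sq₀ (hnonneg x hx) (hnonneg y hy)).1
    (monotoneOn_sq_of_hasDerivAt_mul_self hcont hk hr hx hy hxy)

end LinearGrowth

theorem hasDerivAt_sub_sq_div_rpow {u : ℝ → ℝ} {c p w z : ℝ} (hz : 0 < z) (hu : u z ≠ 0)
    (hode : HasDerivAt u (w / (2 * z * u z) * (u z ^ 2 - c)) z) :
    HasDerivAt (fun z ↦ (c - u z ^ 2) / z ^ p) ((w - p) / z * ((c - u z ^ 2) / z ^ p)) z := by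
  have hnum : HasDerivAt (fun z ↦ c - u z ^ 2) (w / z * (c - u z ^ 2)) z :=
    ((hode.fun_pow 2).const_sub c).congr_deriv (by field_simp; push_cast; ring)
  have hden : HasDerivAt (fun z : ℝ ↦ z ^ p) (p / z * z ^ p) z :=
    (Real.hasDerivAt_rpow_const (Or.inl hz.ne')).congr_deriv
      (by rw [Real.rpow_sub_one hz.ne']; ring)
  have hden_ne : z ^ p ≠ 0 := (Real.rpow_pos_of_pos hz p).ne'
  exact (hnum.fun_div hden hden_ne).congr_deriv (by field_simp)

theorem monotoneOn_sub_sq_div_rpow {a b c p : ℝ} (hb : 0 < b) {u w : ℝ → ℝ}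
    (hcont : ContinuousOn u (Icc b a)) (hne : ∀ z ∈ Ioo b a, u z ≠ 0) (hend : u a ^ 2 ≤ c)
    (hw : ∀ z ∈ Ioo b a, p ≤ w z)
    (hode : ∀ z ∈ Ioo b a, HasDerivAt u (w z / (2 * z * u z) * (u z ^ 2 - c)) z) :
    MonotoneOn (fun z ↦ (c - u z ^ 2) / z ^ p) (Icc b a) := by
  rcases lt_or_ge a b with hab | hba
  · simp [Icc_eq_empty_of_lt hab, MonotoneOn]
  have hpos : ∀ z ∈ Icc b a, 0 < z := fun _ hz ↦ hb.trans_le hz.1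
  have hcont_rpow : ContinuousOn (fun z : ℝ ↦ z ^ p) (Icc b a) :=
    continuousOn_id.rpow_const fun z hz ↦ Or.inl (hpos z hz).ne'
  refine monotoneOn_of_hasDerivAt_mul_self (k := fun z ↦ (w z - p) / z) ?_ ?_ ?_ ?_
  · exact (continuousOn_const.sub (hcont.pow 2)).div hcont_rpow
      fun z hz ↦ (Real.rpow_pos_of_pos (hpos z hz) p).ne'
  · exact fun z hz ↦ div_nonneg (sub_nonneg.2 (hw z hz)) (hb.trans hz.1).le
  · exact fun z hz ↦ hasDerivAt_sub_sq_div_rpow (hb.trans hz.1) (hne z hz) (hode z hz)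
  · exact div_nonneg (sub_nonneg.2 hend) (Real.rpow_nonneg (hb.le.trans hba) p)

theorem inner_barrier_profile_estimate_general {a b c p : ℝ} (hb : 0 < b) (hba : b ≤ a)
    (hc : 0 ≤ c) {u w : ℝ → ℝ} (hcont : ContinuousOn u (Icc b a))
    (hne : ∀ z ∈ Ioo b a, u z ≠ 0) (hend : u a = 0) (hw : ∀ z ∈ Ioo b a, p ≤ w z)
    (hode : ∀ z ∈ Ioo b a, HasDerivAt u (w z / (2 * z * u z) * (u z ^ 2 - c)) z) :
    c - c * (b / a) ^ p ≤ u b ^ 2 := by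
  have hmono : (c - u b ^ 2) / b ^ p ≤ (c - u a ^ 2) / a ^ p :=
    monotoneOn_sub_sq_div_rpow hb hcont hne (by simpa [hend] using hc) hw hode
      (left_mem_Icc.2 hba) (right_mem_Icc.2 hba) hba
  rw [hend, div_le_iff₀ (Real.rpow_pos_of_pos hb p)] at hmono
  rw [Real.div_rpow hb.le (hb.le.trans hba)]
  linear_combination hmono

/-- Inner barrier profile estimate: for `a ≥ 8`, if `u` is continuous on `[√a, a]`
with `0 < u < √2` on `[√a, a)`, `u(a) = 0`, and on `[√a, a)` satisfies the ODE
`u′ = (w/(2zu))(u² - 2)` with `2 ≤ w(z) ≤ 2 + 16/z²`, then `u(√a)² ≥ 2 - 2/a`. -/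
theorem inner_barrier_profile_estimate
    (a : ℝ) (ha : 8 ≤ a) (u w : ℝ → ℝ)
    (hcont : ContinuousOn u (Set.Icc (Real.sqrt a) a))
    (hpos : ∀ z ∈ Set.Ico (Real.sqrt a) a, 0 < u z ∧ u z < Real.sqrt 2)
    (hend : u a = 0)
    (hw : ∀ z ∈ Set.Ico (Real.sqrt a) a, 2 ≤ w z ∧ w z ≤ 2 + 16 / z ^ 2)
    (hode : ∀ z ∈ Set.Ico (Real.sqrt a) a,
      HasDerivWithinAt u (w z / (2 * z * u z) * ((u z) ^ 2 - 2))
        (Set.Icc (Real.sqrt a) a) z) :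
    2 - 2 / a ≤ (u (Real.sqrt a)) ^ 2 := by
  have ha0 : 0 < a := by linarith
  have hquot : (√a / a) ^ (2 : ℝ) = 1 / a := by
    rw [Real.rpow_two, Real.sqrt_div_self', div_pow, one_pow, Real.sq_sqrt ha0.le]
  simpa only [hquot, mul_one_div] using inner_barrier_profile_estimate_general
    (Real.sqrt_pos.2 ha0) (Real.sqrt_le_self_iff.2 (Or.inr (by linarith))) zero_le_two hcont
    (fun z hz ↦ (hpos z (Ioo_subset_Ico_self hz)).1.ne') hend
    (fun z hz ↦ (hw z (Ioo_subset_Ico_self hz)).1)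
    (fun z hz ↦ (hode z (Ioo_subset_Ico_self hz)).hasDerivAt (Icc_mem_nhds hz.1 hz.2))
end

section
/- Riccati asymptotics: let A > 0, T ∈ ℝ, and let u : (−∞, T] → ℝ be a differentiable function with u(τ) > 0 for all τ and u(τ) → 0 as τ → −∞, satisfying u′(τ) = A·u(τ)² + E(τ), where the error E satisfies E(τ)/u(τ)² → 0 as τ → −∞. Then A·|τ|·u(τ) → 1 as τ → −∞; that is, u(τ) = (1 + o(1))/(A|τ|) as τ → −∞. -/
open Filter

/-!
The Riccati equation linearises under `u ↦ u⁻¹`: since `(u⁻¹)′ = -u′ / u² = -(A + E / u²) → -A`,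
the mean value inequality gives `u⁻¹ ∼ -A τ` as `τ → -∞`.
-/

section LinearGrowth

variable {F : Type*} [NormedAddCommGroup F] [NormedSpace ℝ F] {f f' : ℝ → F}

theorem isLittleO_id_atBot_of_tendsto_deriv_zero
    (hf : ∀ᶠ x in atBot, HasDerivAt f (f' x) x) (hf' : Tendsto f' atBot (nhds 0)) :
    f =o[atBot] (id : ℝ → ℝ) := by
  refine Asymptotics.isLittleO_iff.2 fun c hc => ?_
  have hsmall : ∀ᶠ x in atBot, ‖f' x‖ ≤ c / 2 :=
    hf'.norm.eventually_le_const (by simpa using half_pos hc)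
  obtain ⟨S, hS⟩ := eventually_atBot.1 (hf.and hsmall)
  have hconst : ∀ᶠ x in atBot, ‖‖f S‖ + c / 2 * ‖S‖‖ ≤ c / 2 * ‖id x‖ :=
    (Asymptotics.isLittleO_const_id_atBot (‖f S‖ + c / 2 * ‖S‖)).def (half_pos hc)
  filter_upwards [eventually_le_atBot S, hconst] with x hxS hx
  have hmvt : ‖f x - f S‖ ≤ c / 2 * ‖x - S‖ :=
    (convex_Iic S).norm_image_sub_le_of_norm_hasDerivWithin_le
      (fun y hy => (hS y hy).1.hasDerivWithinAt) (fun y hy => (hS y hy).2) Set.self_mem_Iic hxS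
  calc ‖f x‖ ≤ ‖f S‖ + ‖f x - f S‖ := norm_le_insert' _ _
    _ ≤ ‖f S‖ + c / 2 * (‖x‖ + ‖S‖) := by
      gcongr
      exact hmvt.trans (by gcongr; exact norm_sub_le x S)
    _ = (‖f S‖ + c / 2 * ‖S‖) + c / 2 * ‖x‖ := by ring
    _ ≤ c / 2 * ‖x‖ + c / 2 * ‖x‖ := by
      gcongr
      exact (Real.le_norm_self _).trans hx
    _ = c * ‖id x‖ := by rw [id_eq]; ring

theorem tendsto_inv_smul_atBot_of_tendsto_deriv {L : F}
    (hf : ∀ᶠ x in atBot, HasDerivAt f (f' x) x) (hf' : Tendsto f' atBot (nhds L)) :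
    Tendsto (fun x => x⁻¹ • f x) atBot (nhds L) := by
  have hderiv : ∀ᶠ x in atBot, HasDerivAt (fun y => f y - y • L) (f' x - L) x :=
    hf.mono fun x hx => by simpa using hx.fun_sub ((hasDerivAt_id x).smul_const L)
  have hsub : Tendsto (fun x => x⁻¹ • (f x - x • L)) atBot (nhds 0) :=
    (isLittleO_id_atBot_of_tendsto_deriv_zero hderiv
      (tendsto_sub_nhds_zero_iff.2 hf')).tendsto_inv_smul_nhds_zero
  refine tendsto_sub_nhds_zero_iff.1 (hsub.congr' ?_)
  filter_upwards [eventually_ne_atBot 0] with x hx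
  rw [smul_sub, inv_smul_smul₀ hx]

end LinearGrowth

section Riccati

variable {𝕜 : Type*} [NontriviallyNormedField 𝕜] [NormedAlgebra ℝ 𝕜] {A : 𝕜} {u : ℝ → 𝕜}

theorem tendsto_smul_atBot_of_tendsto_deriv_div_sq {u' : ℝ → 𝕜} (hA : A ≠ 0)
    (hne : ∀ᶠ τ in atBot, u τ ≠ 0) (hu : ∀ᶠ τ in atBot, HasDerivAt u (u' τ) τ)
    (hu' : Tendsto (fun τ => u' τ / u τ ^ 2) atBot (nhds A)) :
    Tendsto (fun τ => τ • u τ) atBot (nhds (-A)⁻¹) := by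
  have hderiv : ∀ᶠ τ in atBot, HasDerivAt u⁻¹ (-u' τ / u τ ^ 2) τ := by
    filter_upwards [hne, hu] with τ hτ hτ'
    exact hτ'.inv hτ
  have hderiv_lim : Tendsto (fun τ => -u' τ / u τ ^ 2) atBot (nhds (-A)) := by
    simpa only [neg_div] using hu'.neg
  have hinv : Tendsto (fun τ => τ⁻¹ • (u τ)⁻¹) atBot (nhds (-A)) :=
    tendsto_inv_smul_atBot_of_tendsto_deriv hderiv hderiv_lim
  simpa only [smul_inv₀, inv_inv] using hinv.inv₀ (neg_ne_zero.2 hA)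

theorem riccati_asymptotics_general {E : ℝ → 𝕜} (hA : A ≠ 0)
    (hne : ∀ᶠ τ in atBot, u τ ≠ 0)
    (hode : ∀ᶠ τ in atBot, HasDerivAt u (A * u τ ^ 2 + E τ) τ)
    (hE : Tendsto (fun τ => E τ / u τ ^ 2) atBot (nhds 0)) :
    Tendsto (fun τ => A * |τ| • u τ) atBot (nhds 1) := by
  have hquot : Tendsto (fun τ => (A * u τ ^ 2 + E τ) / u τ ^ 2) atBot (nhds A) := by
    refine Tendsto.congr' ?_ (by simpa only [add_zero] using hE.const_add A)
    filter_upwards [hne] with τ hτ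
    rw [add_div, mul_div_cancel_right₀ A (pow_ne_zero 2 hτ)]
  have hsmul : Tendsto (fun τ => -A * τ • u τ) atBot (nhds 1) := by
    simpa only [mul_inv_cancel₀ (neg_ne_zero.2 hA)] using
      (tendsto_smul_atBot_of_tendsto_deriv_div_sq hA hne hode hquot).const_mul (-A)
  refine hsmul.congr' ?_
  filter_upwards [eventually_le_atBot 0] with τ hτ
  rw [abs_of_nonpos hτ, neg_smul, neg_mul, mul_neg]

end Riccati

/-- Riccati asymptotics: a positive solution `u` on `(-∞, T]` of
`u′ = A u² + E` with `u → 0` and `E = o(u²)` as `τ → -∞` satisfies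
`u(τ) = (1 + o(1))/(A|τ|)`, i.e. `A |τ| u(τ) → 1` as `τ → -∞`. -/
theorem riccati_asymptotics
    (A T : ℝ) (hA : 0 < A) (u E : ℝ → ℝ)
    (hpos : ∀ τ ≤ T, 0 < u τ)
    (hlim : Tendsto u atBot (nhds 0))
    (hode : ∀ τ ≤ T, HasDerivAt u (A * (u τ) ^ 2 + E τ) τ)
    (hE : Tendsto (fun τ => E τ / (u τ) ^ 2) atBot (nhds 0)) :
    Tendsto (fun τ => A * |τ| * u τ) atBot (nhds 1) := by
  simpa only [smul_eq_mul, mul_assoc] using riccati_asymptotics_general hA.ne'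
    (eventually_atBot.2 ⟨T, fun τ hτ => (hpos τ hτ).ne'⟩) (eventually_atBot.2 ⟨T, hode⟩) hE
end

section
/- Asymptotics for the neutral-mode ODE system: let A > 0, T ∈ ℝ, and let α = (α₁, α₂, α₃) : (−∞, T] → ℝ³ be continuously differentiable with |α(τ)| > 0 for all τ, α(τ) → 0 as τ → −∞, and α₁(τ) < 0 for all τ. Suppose α satisfies the system α₁′ = −2A α₁² − A(α₂² + α₃²) + E₁, α₂′ = −A α₁ α₂ + E₂, α₃′ = −A α₁ α₃ + E₃, where the errors satisfy Eᵢ(τ)/|α(τ)|² → 0 as τ → −∞ for i = 1,2,3. Then A·|τ|·(|α₁(τ)| + |α(τ)|) → 1 as τ → −∞, and |α₂(τ)| + |α₃(τ)| = o(|α₁(τ)|) as τ → −∞, i.e. (|α₂(τ)| + |α₃(τ)|)/|α₁(τ)| → 0. -/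
open Filter

/-!
With `n` the unit vector of the first axis, the system reads `α' = -A (⟪n, α⟫ α + |α|² n) + E` with
`E = o(|α|²)`. In terms of `r = 1 / |α| → ∞` and the cosine `c` of the angle between `α` and `n`,
`r' = 2 A c + o(1)` and `r c' = -A (1 - c²) + o(1)`.
If `c > -1 + δ` at some very negative time, then `c > -1 + δ` at all earlier times, because `c' < 0`
where `c = -1 + δ`; along such a trajectory `δ log r - 2 c` is nondecreasing in `τ`, which bounds
`r` as `τ → -∞`, a contradiction. Hence `c → -1`, then `r' → -2 A`, so that `r ∼ 2 A |τ|` and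
`2 A τ α(τ) → n`.
-/

open Asymptotics Set Topology
open scoped RealInnerProductSpace

theorem lt_of_hasDerivAt_neg_of_eq {f f' : ℝ → ℝ} {k b : ℝ}
    (hf : ∀ x ≤ b, HasDerivAt f (f' x) x) (hb : k < f b) (hf' : ∀ x ≤ b, f x = k → f' x < 0)
    {a : ℝ} (hab : a ≤ b) : k < f a := by
  by_contra! hfa
  refine hb.not_ge <| image_le_of_deriv_right_lt_deriv_boundary (B := fun _ ↦ k) (B' := 0)
    (fun x hx ↦ (hf x hx.2).continuousAt.continuousWithinAt)
    (fun x hx ↦ (hf x hx.2.le).hasDerivWithinAt) hfa (fun x ↦ hasDerivAt_const x k)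
    (fun x hx ↦ hf' x hx.2.le) (right_mem_Icc.2 hab)

theorem isLittleO_id_atBot_of_hasDerivAt {F : Type*} [NormedAddCommGroup F] [NormedSpace ℝ F]
    {f f' : ℝ → F} (hf : ∀ᶠ x in atBot, HasDerivAt f (f' x) x) (hf' : Tendsto f' atBot (𝓝 0)) :
    f =o[atBot] (id : ℝ → ℝ) := by
  refine IsLittleO.of_bound fun ε hε ↦ ?_
  obtain ⟨b, hb⟩ := eventually_atBot.1 <|
    hf.and (hf'.norm.eventually_le_const (norm_zero.trans_lt (half_pos hε)))
  have hconst : (fun _ ↦ ‖f b‖ + ε / 2 * ‖b‖) =o[atBot] (id : ℝ → ℝ) :=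
    isLittleO_const_id_atBot _
  filter_upwards [eventually_le_atBot b, hconst.bound (half_pos hε)] with x hx hxc
  have hmean : ‖f x - f b‖ ≤ ε / 2 * ‖x - b‖ :=
    (convex_Iic b).norm_image_sub_le_of_norm_hasDerivWithin_le
      (fun y hy ↦ (hb y hy).1.hasDerivWithinAt) (fun y hy ↦ (hb y hy).2) self_mem_Iic hx
  calc ‖f x‖ ≤ ‖f b‖ + ‖f x - f b‖ := norm_le_norm_add_norm_sub' _ _
    _ ≤ (‖f b‖ + ε / 2 * ‖b‖) + ε / 2 * ‖x‖ := by
      linarith [mul_le_mul_of_nonneg_left (norm_sub_le x b) (half_pos hε).le]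
    _ ≤ ε * ‖id x‖ := by
      rw [id_eq] at hxc ⊢
      linarith [(le_abs_self _).trans hxc]

theorem tendsto_div_self_atBot_of_hasDerivAt {f f' : ℝ → ℝ} {L : ℝ}
    (hf : ∀ᶠ x in atBot, HasDerivAt f (f' x) x) (hf' : Tendsto f' atBot (𝓝 L)) :
    Tendsto (fun x ↦ f x / x) atBot (𝓝 L) := by
  have hsub : (fun x ↦ f x - L * x) =o[atBot] (id : ℝ → ℝ) :=
    isLittleO_id_atBot_of_hasDerivAt
      (hf.mono fun x hx ↦ hx.sub ((hasDerivAt_id x).const_mul L))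
      (by simpa using hf'.sub_const L)
  have hlim := hsub.tendsto_div_nhds_zero.add_const L
  rw [zero_add] at hlim
  refine hlim.congr' ?_
  filter_upwards [eventually_ne_atBot 0] with x hx
  simp only [id_eq]
  field_simp
  ring

section Angle

variable {A : ℝ} {r c p q : ℝ → ℝ}

theorem monotoneOn_mul_log_sub_two_mul {δ b : ℝ} (hA : 0 ≤ A) (hδ : 0 ≤ δ)
    (hrpos : ∀ τ ≤ b, 0 < r τ) (hc1 : ∀ τ ≤ b, c τ ≤ 1) (hcδ : ∀ τ ≤ b, -1 + δ ≤ c τ)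
    (hr : ∀ τ ≤ b, HasDerivAt r (2 * A * c τ + q τ) τ)
    (hc : ∀ τ ≤ b, HasDerivAt c ((-A * (1 - c τ ^ 2) + p τ) / r τ) τ)
    (hp : ∀ τ ≤ b, p τ ≤ A * δ / 2) (hq : ∀ τ ≤ b, -A ≤ q τ) :
    MonotoneOn (fun τ ↦ δ * Real.log (r τ) - 2 * c τ) (Iic b) := by
  have hderiv (τ) (hτ : τ ≤ b) :=
    (((hr τ hτ).log (hrpos τ hτ).ne').const_mul δ).sub ((hc τ hτ).const_mul 2)
  refine monotoneOn_of_hasDerivWithinAt_nonneg (convex_Iic b)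
    (fun τ hτ ↦ (hderiv τ hτ).continuousAt.continuousWithinAt)
    (fun τ hτ ↦ (hderiv τ (interior_subset (s := Iic b) hτ)).hasDerivWithinAt) fun τ hτ ↦ ?_
  replace hτ : τ ≤ b := interior_subset (s := Iic b) hτ
  -- The derivative is `(2 A (δ c + 1 - c ^ 2) + δ q - 2 p) / r`, where
  -- `δ c + 1 - c ^ 2 = δ + (1 - c) (1 + c - δ)`.
  have hfactor : 0 ≤ A * ((1 - c τ) * (1 + c τ - δ)) :=
    mul_nonneg hA (mul_nonneg (by linarith [hc1 τ hτ]) (by linarith [hcδ τ hτ]))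
  have hq_shift : 0 ≤ δ * (A + q τ) := mul_nonneg hδ (by linarith [hq τ hτ])
  have hnum : 0 ≤ 2 * (A * ((1 - c τ) * (1 + c τ - δ))) + 2 * (A * δ / 2 - p τ) +
      δ * (A + q τ) := by
    linarith [hp τ hτ]
  refine (div_nonneg hnum (hrpos τ hτ).le).trans_eq ?_
  ring

theorem eventually_le_neg_one_add {δ : ℝ} (hA : 0 < A) (hδ : 0 < δ) (hδ1 : δ ≤ 1)
    (hrtop : Tendsto r atBot atTop) (hc1 : ∀ᶠ τ in atBot, c τ ≤ 1)
    (hr : ∀ᶠ τ in atBot, HasDerivAt r (2 * A * c τ + q τ) τ)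
    (hc : ∀ᶠ τ in atBot, HasDerivAt c ((-A * (1 - c τ ^ 2) + p τ) / r τ) τ)
    (hp : Tendsto p atBot (𝓝 0)) (hq : Tendsto q atBot (𝓝 0)) :
    ∀ᶠ τ in atBot, c τ ≤ -1 + δ := by
  have hAδ : 0 < A * δ / 2 := by positivity
  obtain ⟨S, hS⟩ := eventually_atBot.1 <| (hrtop.eventually_gt_atTop 0).and <| hc1.and <|
    hr.and <| hc.and <| (hp.eventually_le_const hAδ).and <|
    hq.eventually_const_le (neg_lt_zero.2 hA)
  filter_upwards [eventually_le_atBot S] with b hbS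
  have hSb := fun τ (hτ : τ ≤ b) ↦ hS τ (hτ.trans hbS)
  choose hrpos hc1 hr hc hp hq using hSb
  by_contra! hb
  have hδsq : δ ≤ 1 - (-1 + δ) ^ 2 := by nlinarith
  have hstay (τ) (hτ : τ ≤ b) : -1 + δ < c τ := by
    refine lt_of_hasDerivAt_neg_of_eq hc hb (fun x hx hcx ↦ ?_) hτ
    refine div_neg_of_neg_of_pos ?_ (hrpos x hx)
    rw [hcx]
    linarith [hp x hx, mul_le_mul_of_nonneg_left hδsq hA.le]
  have hmono : MonotoneOn (fun τ ↦ δ * Real.log (r τ) - 2 * c τ) (Iic b) :=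
    monotoneOn_mul_log_sub_two_mul hA.le hδ.le hrpos hc1 (fun τ hτ ↦ (hstay τ hτ).le) hr hc hp hq
  have hlog : Tendsto (fun τ ↦ δ * Real.log (r τ)) atBot atTop :=
    (Real.tendsto_log_atTop.comp hrtop).const_mul_atTop hδ
  obtain ⟨τ, hlarge, hτ⟩ := ((hlog.eventually_gt_atTop
    (δ * Real.log (r b) - 2 * c b + 2)).and (eventually_le_atBot b)).exists
  linarith [hmono hτ self_mem_Iic hτ, hc1 τ hτ]

theorem tendsto_neg_one_of_hasDerivAt (hA : 0 < A)
    (hrtop : Tendsto r atBot atTop) (hcabs : ∀ᶠ τ in atBot, |c τ| ≤ 1)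
    (hr : ∀ᶠ τ in atBot, HasDerivAt r (2 * A * c τ + q τ) τ)
    (hc : ∀ᶠ τ in atBot, HasDerivAt c ((-A * (1 - c τ ^ 2) + p τ) / r τ) τ)
    (hp : Tendsto p atBot (𝓝 0)) (hq : Tendsto q atBot (𝓝 0)) :
    Tendsto c atBot (𝓝 (-1)) := by
  refine tendsto_order.2 ⟨fun a ha ↦ ?_, fun a ha ↦ ?_⟩
  · exact hcabs.mono fun τ hτ ↦ ha.trans_le (abs_le.1 hτ).1
  · have hδ : 0 < min ((1 + a) / 2) 1 := lt_min (by linarith) one_pos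
    filter_upwards [eventually_le_neg_one_add hA hδ (min_le_right _ _) hrtop
      (hcabs.mono fun τ hτ ↦ (abs_le.1 hτ).2) hr hc hp hq] with τ hτ
    linarith [min_le_left ((1 + a) / 2) 1]

end Angle

section InnerProductSpace

variable {V : Type*} [NormedAddCommGroup V] [InnerProductSpace ℝ V]

theorem tendsto_inner_div_zero_of_isLittleO {ι : Type*} {l : Filter ι} {u E : ι → V} {g : ι → ℝ}
    (hu : ∀ᶠ i in l, ‖u i‖ ≤ 1) (hE : E =o[l] g) :
    Tendsto (fun i ↦ ⟪u i, E i⟫ / g i) l (𝓝 0) := by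
  have hinner : (fun i ↦ ⟪u i, E i⟫) =O[l] E := by
    refine IsBigO.of_bound 1 (hu.mono fun i hi ↦ ?_)
    exact (norm_inner_le_norm _ _).trans (mul_le_mul_of_nonneg_right hi (norm_nonneg _))
  exact (hinner.trans_isLittleO hE).tendsto_div_nhds_zero

theorem hasDerivAt_inv_norm {f : ℝ → V} {f' : V} {x : ℝ} (hf : HasDerivAt f f' x)
    (h0 : f x ≠ 0) :
    HasDerivAt (fun y ↦ ‖f y‖⁻¹) (-⟪NormedSpace.normalize (f x), f'⟫ / ‖f x‖ ^ 2) x := by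
  have hpos : 0 < ‖f x‖ := norm_pos_iff.2 h0
  have hsqrt := (hf.norm_sq.sqrt (pow_pos hpos 2).ne').fun_inv (by positivity)
  simp only [Real.sqrt_sq (norm_nonneg _)] at hsqrt
  refine hsqrt.congr_deriv ?_
  rw [NormedSpace.normalize, real_inner_smul_left]
  field_simp

theorem norm_sub_inner_smul_le (v : V) {u : V} (hu : ‖u‖ ≤ 1) : ‖v - ⟪v, u⟫ • u‖ ≤ ‖v‖ := by
  refine (sq_le_sq₀ (norm_nonneg _) (norm_nonneg v)).1 ?_
  rw [norm_sub_sq_real, inner_smul_right, norm_smul, mul_pow, Real.norm_eq_abs, sq_abs]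
  nlinarith [mul_le_mul_of_nonneg_left (pow_le_one₀ (n := 2) (norm_nonneg u) hu)
    (sq_nonneg ⟪v, u⟫)]

theorem tendsto_of_tendsto_inner_one {ι : Type*} {l : Filter ι} {u : ι → V} {v : V}
    (hv : ‖v‖ = 1) (hu : ∀ᶠ i in l, ‖u i‖ ≤ 1) (h : Tendsto (fun i ↦ ⟪v, u i⟫) l (𝓝 1)) :
    Tendsto u l (𝓝 v) := by
  have hsqrt : Tendsto (fun i ↦ √(2 - 2 * ⟪v, u i⟫)) l (𝓝 0) := by
    simpa using ((h.const_mul 2).const_sub 2).sqrt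
  refine tendsto_iff_norm_sub_tendsto_zero.2
    (squeeze_zero' (.of_forall fun i ↦ norm_nonneg _) (hu.mono fun i hi ↦ ?_) hsqrt)
  refine Real.le_sqrt_of_sq_le ?_
  rw [norm_sub_sq_real, real_inner_comm, hv]
  linarith [pow_le_one₀ (n := 2) (norm_nonneg (u i)) hi]

/-- The quadratic vector field with axis `n` (a unit vector in all uses) that drives the neutral
modes: writing `v = x n + y` with `y` orthogonal to `n`, its axial part is `-2 A x² - A ‖y‖²` and
its transversal part is `-A x y`. -/
noncomputable def neutralField (A : ℝ) (n v : V) : V := -A • (⟪n, v⟫ • v + ‖v‖ ^ 2 • n)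

variable {A : ℝ} {n : V}

theorem inner_self_neutralField (v : V) :
    ⟪v, neutralField A n v⟫ = -2 * A * ⟪n, v⟫ * ‖v‖ ^ 2 := by
  simp only [neutralField, inner_smul_right, inner_add_right, real_inner_self_eq_norm_sq,
    real_inner_comm n v]
  ring

theorem inner_axis_neutralField (hn : ‖n‖ = 1) (v : V) :
    ⟪n, neutralField A n v⟫ = -A * (⟪n, v⟫ ^ 2 + ‖v‖ ^ 2) := by
  simp only [neutralField, inner_smul_right, inner_add_right, real_inner_self_eq_norm_sq, hn]
  ring

variable {α E : ℝ → V} {τ : ℝ}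

theorem hasDerivAt_inv_norm_of_neutralField
    (hα : HasDerivAt α (neutralField A n (α τ) + E τ) τ) (h0 : α τ ≠ 0) :
    HasDerivAt (fun s ↦ ‖α s‖⁻¹)
      (2 * A * ⟪n, NormedSpace.normalize (α τ)⟫ +
        -(⟪NormedSpace.normalize (α τ), E τ⟫ / ‖α τ‖ ^ 2)) τ := by
  refine (hasDerivAt_inv_norm hα h0).congr_deriv ?_
  simp only [NormedSpace.normalize, real_inner_smul_left, inner_smul_right, inner_add_right,
    inner_self_neutralField]
  field_simp
  ring

theorem hasDerivAt_inner_normalize_of_neutralField (hn : ‖n‖ = 1)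
    (hα : HasDerivAt α (neutralField A n (α τ) + E τ) τ) (h0 : α τ ≠ 0) :
    HasDerivAt (fun s ↦ ⟪n, NormedSpace.normalize (α s)⟫)
      ((-A * (1 - ⟪n, NormedSpace.normalize (α τ)⟫ ^ 2) +
        ⟪n - ⟪n, NormedSpace.normalize (α τ)⟫ • NormedSpace.normalize (α τ), E τ⟫ / ‖α τ‖ ^ 2) /
          ‖α τ‖⁻¹) τ := by
  have hprod := (hasDerivAt_inv_norm_of_neutralField hα h0).fun_mul
    ((hasDerivAt_const τ n).inner ℝ hα)
  simp only [NormedSpace.normalize, real_inner_smul_left, inner_smul_right, inner_sub_left]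
    at hprod ⊢
  refine hprod.congr_deriv ?_
  rw [inner_add_right, inner_axis_neutralField hn, inner_zero_left]
  field_simp
  ring

theorem tendsto_two_mul_smul_of_hasDerivAt_neutralField (hA : 0 < A) (hn : ‖n‖ = 1)
    (h0 : ∀ᶠ τ in atBot, α τ ≠ 0) (hlim : Tendsto α atBot (𝓝 0))
    (hα : ∀ᶠ τ in atBot, HasDerivAt α (neutralField A n (α τ) + E τ) τ)
    (hE : E =o[atBot] fun τ ↦ ‖α τ‖ ^ 2) :
    Tendsto (fun τ ↦ (2 * A * τ) • α τ) atBot (𝓝 n) := by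
  set u : ℝ → V := fun τ ↦ NormedSpace.normalize (α τ)
  have hu : ∀ᶠ τ in atBot, ‖u τ‖ ≤ 1 :=
    h0.mono fun τ hτ ↦ (NormedSpace.norm_normalize_eq_one_iff.2 hτ).le
  have hcabs : ∀ᶠ τ in atBot, |⟪n, u τ⟫| ≤ 1 := hu.mono fun τ hτ ↦
    (abs_real_inner_le_norm n (u τ)).trans (by rwa [hn, one_mul])
  have hrtop : Tendsto (fun τ ↦ ‖α τ‖⁻¹) atBot atTop :=
    (tendsto_nhdsWithin_iff.2 ⟨tendsto_zero_iff_norm_tendsto_zero.1 hlim,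
      h0.mono fun τ hτ ↦ norm_pos_iff.2 hτ⟩).inv_tendsto_nhdsGT_zero
  have hr := (h0.and hα).mono fun τ hτ ↦ hasDerivAt_inv_norm_of_neutralField hτ.2 hτ.1
  have huE := tendsto_inner_div_zero_of_isLittleO hu hE
  have hc : Tendsto (fun τ ↦ ⟪n, u τ⟫) atBot (𝓝 (-1)) :=
    tendsto_neg_one_of_hasDerivAt hA hrtop hcabs hr
      ((h0.and hα).mono fun τ hτ ↦ hasDerivAt_inner_normalize_of_neutralField hn hτ.2 hτ.1)
      (tendsto_inner_div_zero_of_isLittleO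
        (hu.mono fun τ hτ ↦ (norm_sub_inner_smul_le n hτ).trans_eq hn) hE)
      (by simpa using huE.neg)
  have hu_lim : Tendsto u atBot (𝓝 (-n)) :=
    tendsto_of_tendsto_inner_one (by rwa [norm_neg]) hu (by simpa using hc.neg)
  have hrdiv : Tendsto (fun τ ↦ ‖α τ‖⁻¹ / τ) atBot (𝓝 (-(2 * A))) :=
    tendsto_div_self_atBot_of_hasDerivAt hr (by simpa using (hc.const_mul (2 * A)).add huE.neg)
  have hprod := ((hrdiv.inv₀ (by simpa using hA.ne')).const_mul (2 * A)).smul hu_lim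
  have hval : (2 * A * (-(2 * A))⁻¹) • -n = n := by
    rw [inv_neg, mul_neg, mul_inv_cancel₀ (by positivity), neg_one_smul, neg_neg]
  rw [hval] at hprod
  refine hprod.congr fun τ ↦ ?_
  rw [inv_div, div_inv_eq_mul, ← mul_assoc, mul_smul, NormedSpace.norm_smul_normalize]

end InnerProductSpace

section Rescaling

variable {ι κ : Type*} [Fintype ι] {l : Filter κ} {s x : κ → ℝ} {y : ι → κ → ℝ}

theorem tendsto_abs_mul_abs_add_sqrt (hx : Tendsto (fun k ↦ s k * x k) l (𝓝 1))
    (hy : ∀ i, Tendsto (fun k ↦ s k * y i k) l (𝓝 0)) :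
    Tendsto (fun k ↦ |s k| * (|x k| + √(x k ^ 2 + ∑ i, y i k ^ 2))) l (𝓝 2) := by
  have hnorm : Tendsto (fun k ↦ √((s k * x k) ^ 2 + ∑ i, (s k * y i k) ^ 2)) l (𝓝 1) := by
    simpa using ((hx.pow 2).add
      (tendsto_finsetSum Finset.univ fun i _ ↦ (hy i).pow 2)).sqrt
  have hsum := hx.abs.add hnorm
  rw [abs_one, one_add_one_eq_two] at hsum
  refine hsum.congr fun k ↦ ?_
  simp only [mul_pow (s k), ← Finset.mul_sum, ← mul_add]
  rw [Real.sqrt_mul (sq_nonneg _), Real.sqrt_sq_eq_abs, abs_mul, mul_add]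

theorem tendsto_sum_abs_div_abs (hx : Tendsto (fun k ↦ s k * x k) l (𝓝 1))
    (hy : ∀ i, Tendsto (fun k ↦ s k * y i k) l (𝓝 0)) :
    Tendsto (fun k ↦ (∑ i, |y i k|) / |x k|) l (𝓝 0) := by
  have hquot := (tendsto_finsetSum Finset.univ fun i _ ↦ (hy i).abs).div hx.abs (by simp)
  simp only [abs_zero, Finset.sum_const_zero, zero_div] at hquot
  refine hquot.congr' ?_
  filter_upwards [hx.eventually_ne one_ne_zero] with k hk
  simp only [Pi.div_apply, abs_mul (s k), ← Finset.mul_sum,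
    mul_div_mul_left _ _ (abs_ne_zero.2 (left_ne_zero_of_mul hk))]

end Rescaling

section Coordinates

theorem isLittleO_toLp {ι κ : Type*} [Fintype ι] {l : Filter κ} {f : κ → ι → ℝ} {g : κ → ℝ}
    (hf : ∀ i, (fun k ↦ f k i) =o[l] g) : (fun k ↦ WithLp.toLp 2 (f k)) =o[l] g :=
  ((PiLp.continuousLinearEquiv 2 ℝ fun _ : ι ↦ ℝ).symm.isBigO_comp f l).trans_isLittleO
    (isLittleO_pi.2 hf)

variable {ι : Type*} [Fintype ι] {A : ℝ} {x e : ℝ → ℝ} {y f : ι → ℝ → ℝ}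

theorem tendsto_two_mul_mul_of_neutral_system (hA : 0 < A)
    (h0 : ∀ᶠ τ in atBot, 0 < x τ ^ 2 + ∑ i, y i τ ^ 2)
    (hlim : Tendsto (fun τ ↦ √(x τ ^ 2 + ∑ i, y i τ ^ 2)) atBot (𝓝 0))
    (hx : ∀ᶠ τ in atBot, HasDerivAt x (-2 * A * x τ ^ 2 - A * ∑ i, y i τ ^ 2 + e τ) τ)
    (hy : ∀ i, ∀ᶠ τ in atBot, HasDerivAt (y i) (-A * x τ * y i τ + f i τ) τ)
    (he : e =o[atBot] fun τ ↦ x τ ^ 2 + ∑ i, y i τ ^ 2)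
    (hf : ∀ i, f i =o[atBot] fun τ ↦ x τ ^ 2 + ∑ i, y i τ ^ 2) :
    Tendsto (fun τ ↦ 2 * A * τ * x τ) atBot (𝓝 1) ∧
      ∀ i, Tendsto (fun τ ↦ 2 * A * τ * y i τ) atBot (𝓝 0) := by
  classical
  set α : ℝ → EuclideanSpace ℝ (Option ι) :=
    fun τ ↦ WithLp.toLp 2 fun j ↦ j.elim (x τ) fun i ↦ y i τ
  set n : EuclideanSpace ℝ (Option ι) := EuclideanSpace.single none 1
  have hsq (τ) : ‖α τ‖ ^ 2 = x τ ^ 2 + ∑ i, y i τ ^ 2 := by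
    simp [α, EuclideanSpace.real_norm_sq_eq, Fintype.sum_option]
  have hnorm (τ) : ‖α τ‖ = √(x τ ^ 2 + ∑ i, y i τ ^ 2) := by
    rw [← hsq, Real.sqrt_sq (norm_nonneg _)]
  simp only [← hsq] at h0 he hf
  simp only [← hnorm] at hlim
  have hα : ∀ᶠ τ in atBot, HasDerivAt α
      (neutralField A n (α τ) + WithLp.toLp 2 fun j ↦ j.elim (e τ) fun i ↦ f i τ) τ := by
    filter_upwards [hx, eventually_all.2 hy] with τ hxτ hyτ
    have hX : HasDerivAt (fun s (j : Option ι) ↦ j.elim (x s) fun i ↦ y i s)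
        (fun j ↦ j.elim (-2 * A * x τ ^ 2 - A * ∑ i, y i τ ^ 2 + e τ)
          fun i ↦ -A * x τ * y i τ + f i τ) τ :=
      hasDerivAt_pi.2 <| Option.forall.2 ⟨hxτ, hyτ⟩
    refine ((PiLp.hasFDerivAt_toLp 2 _).comp_hasDerivAt τ hX).congr_deriv ?_
    ext (_ | i) <;>
      simp [neutralField, n, hsq, EuclideanSpace.inner_single_left, α] <;> ring
  have hmain := tendsto_two_mul_smul_of_hasDerivAt_neutralField hA (by simp [n])
    (h0.mono fun τ hτ hzero ↦ hτ.ne' (by simp [hzero]))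
    (tendsto_zero_iff_norm_tendsto_zero.2 hlim) hα (isLittleO_toLp (Option.forall.2 ⟨he, hf⟩))
  have hcoord (j : Option ι) := ((EuclideanSpace.proj (𝕜 := ℝ) j).continuous.tendsto n).comp hmain
  exact ⟨by simpa [n, α] using! hcoord none, fun i ↦ by simpa [n, α] using! hcoord (some i)⟩

theorem neutral_mode_system_asymptotics_general {T : ℝ} (hA : 0 < A)
    (hpos : ∀ τ ≤ T, 0 < √(x τ ^ 2 + ∑ i, y i τ ^ 2))
    (hlim : Tendsto (fun τ ↦ √(x τ ^ 2 + ∑ i, y i τ ^ 2)) atBot (𝓝 0))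
    (hx : ∀ τ ≤ T, HasDerivAt x (-2 * A * x τ ^ 2 - A * ∑ i, y i τ ^ 2 + e τ) τ)
    (hy : ∀ i, ∀ τ ≤ T, HasDerivAt (y i) (-A * x τ * y i τ + f i τ) τ)
    (he : Tendsto (fun τ ↦ e τ / (x τ ^ 2 + ∑ i, y i τ ^ 2)) atBot (𝓝 0))
    (hf : ∀ i, Tendsto (fun τ ↦ f i τ / (x τ ^ 2 + ∑ i, y i τ ^ 2)) atBot (𝓝 0)) :
    Tendsto (fun τ ↦ A * |τ| * (|x τ| + √(x τ ^ 2 + ∑ i, y i τ ^ 2))) atBot (𝓝 1) ∧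
      Tendsto (fun τ ↦ (∑ i, |y i τ|) / |x τ|) atBot (𝓝 0) := by
  have hT : ∀ᶠ τ in atBot, τ ≤ T := eventually_le_atBot T
  have hpos' : ∀ᶠ τ in atBot, 0 < x τ ^ 2 + ∑ i, y i τ ^ 2 :=
    hT.mono fun τ hτ ↦ Real.sqrt_pos.1 (hpos τ hτ)
  have ho {g : ℝ → ℝ} (hg : Tendsto (fun τ ↦ g τ / (x τ ^ 2 + ∑ i, y i τ ^ 2)) atBot (𝓝 0)) :=
    isLittleO_of_tendsto' (hpos'.mono fun τ hτ hzero ↦ absurd hzero hτ.ne') hg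
  obtain ⟨hxlim, hylim⟩ := tendsto_two_mul_mul_of_neutral_system hA hpos' hlim (hT.mono hx)
    (fun i ↦ hT.mono (hy i)) (ho he) fun i ↦ ho (hf i)
  refine ⟨?_, tendsto_sum_abs_div_abs hxlim hylim⟩
  have hfirst := (tendsto_abs_mul_abs_add_sqrt hxlim hylim).div_const 2
  rw [div_self two_ne_zero] at hfirst
  refine hfirst.congr fun τ ↦ ?_
  rw [abs_mul, abs_of_pos (by positivity : 0 < 2 * A)]
  ring

end Coordinates

/-- Asymptotics for the neutral-mode ODE system: if `α = (α₁, α₂, α₃)` is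
continuously differentiable on `(-∞, T]`, nonvanishing, tends to `0` as
`τ → -∞`, has `α₁ < 0`, and satisfies the system
`α₁′ = -2A α₁² - A(α₂² + α₃²) + E₁`, `α₂′ = -A α₁ α₂ + E₂`,
`α₃′ = -A α₁ α₃ + E₃` with errors `Eᵢ = o(|α|²)`, then
`A |τ| (|α₁| + |α|) → 1` and `(|α₂| + |α₃|)/|α₁| → 0` as `τ → -∞`. -/
theorem neutral_mode_system_asymptotics
    (A T : ℝ) (hA : 0 < A) (α₁ α₂ α₃ E₁ E₂ E₃ : ℝ → ℝ)
    (hnorm_pos : ∀ τ ≤ T, 0 < Real.sqrt ((α₁ τ) ^ 2 + (α₂ τ) ^ 2 + (α₃ τ) ^ 2))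
    (hlim : Tendsto (fun τ => Real.sqrt ((α₁ τ) ^ 2 + (α₂ τ) ^ 2 + (α₃ τ) ^ 2))
      atBot (nhds 0))
    (hneg : ∀ τ ≤ T, α₁ τ < 0)
    (hode₁ : ∀ τ ≤ T,
      HasDerivAt α₁ (-2 * A * (α₁ τ) ^ 2 - A * ((α₂ τ) ^ 2 + (α₃ τ) ^ 2) + E₁ τ) τ)
    (hode₂ : ∀ τ ≤ T, HasDerivAt α₂ (-A * α₁ τ * α₂ τ + E₂ τ) τ)
    (hode₃ : ∀ τ ≤ T, HasDerivAt α₃ (-A * α₁ τ * α₃ τ + E₃ τ) τ)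
    (hE₁cont : ContinuousOn E₁ (Set.Iic T))
    (hE₂cont : ContinuousOn E₂ (Set.Iic T))
    (hE₃cont : ContinuousOn E₃ (Set.Iic T))
    (hE₁ : Tendsto (fun τ => E₁ τ / ((α₁ τ) ^ 2 + (α₂ τ) ^ 2 + (α₃ τ) ^ 2))
      atBot (nhds 0))
    (hE₂ : Tendsto (fun τ => E₂ τ / ((α₁ τ) ^ 2 + (α₂ τ) ^ 2 + (α₃ τ) ^ 2))
      atBot (nhds 0))
    (hE₃ : Tendsto (fun τ => E₃ τ / ((α₁ τ) ^ 2 + (α₂ τ) ^ 2 + (α₃ τ) ^ 2))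
      atBot (nhds 0)) :
    Tendsto (fun τ => A * |τ| *
        (|α₁ τ| + Real.sqrt ((α₁ τ) ^ 2 + (α₂ τ) ^ 2 + (α₃ τ) ^ 2)))
      atBot (nhds 1) ∧
    Tendsto (fun τ => (|α₂ τ| + |α₃ τ|) / |α₁ τ|) atBot (nhds 0) := by
  have h := neutral_mode_system_asymptotics_general (T := T) (x := α₁) (y := ![α₂, α₃]) (e := E₁)
    (f := ![E₂, E₃]) hA
  simp only [Fin.sum_univ_two, Fin.forall_fin_two, Matrix.cons_val_zero, Matrix.cons_val_one,
    ← add_assoc] at h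
  exact h hnorm_pos hlim hode₁ ⟨hode₂, hode₃⟩ hE₁ ⟨hE₂, hE₃⟩
end

section
/- Discrete parabola iteration: let r : [1, ∞) → ℝ be a continuous function with r(z) > 0 for all z, and let ε : [1, ∞) → ℝ be a bounded function with ε(z) → 0 as z → ∞. Suppose that for every z ≥ 1 one has |r(z + r(z)) − r(z) − 1| ≤ ε(z). Then r(h)/√(2h) → 1 as h → ∞; that is, r(h) = √(2h) + o(√h). -/
open Filter

open Set Function Topology

/-!
Let `T z = z + r z`, where `r (T z) - r z → c`. Every `z ≥ a` lies on the `T`-orbit of a point of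
the compact fundamental domain `[a, T a]`, so a function which does not increase along orbits is
bounded above by its maximum there. Applied to `z ↦ c * z - r z ^ 2`, this shows `r z → ∞`. With
`d z = r (T z) - r z` it follows that
`(r (T z) ^ 2 - r z ^ 2) / (T z - z) = d z * (d z / r z + 2) → 2 * c`,
and a Stolz–Cesàro argument, which bounds `z ↦ r z ^ 2 - m * z` above for `m > 2 * c` and below for
`m < 2 * c`, gives `r z ^ 2 / z → 2 * c`.
-/

section Orbits

theorem mapsTo_Ici_of_forall_lt {α : Type*} [Preorder α] {T : α → α} {a : α}
    (hlt : ∀ z ≥ a, z < T z) : MapsTo T (Ici a) (Ici a) :=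
  fun z hz => le_trans hz (hlt z hz).le

variable {α : Type*} [ConditionallyCompleteLinearOrder α] [TopologicalSpace α] [OrderTopology α]
  {T : α → α} {a : α}

theorem exists_lt_iterate (hT : ContinuousOn T (Ici a)) (hlt : ∀ z ≥ a, z < T z) (h : α) :
    ∃ k, h < T^[k] a := by
  by_contra! hbdd
  have hge (k : ℕ) : a ≤ T^[k] a := (mapsTo_Ici_of_forall_lt hlt).iterate k self_mem_Ici
  have hmono : Monotone fun k => T^[k] a := monotone_nat_of_le_succ fun k => by
    simpa only [iterate_succ_apply'] using (hlt _ (hge k)).le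
  have hlim := tendsto_atTop_ciSup hmono ⟨h, forall_mem_range.2 hbdd⟩
  set y := ⨆ k, T^[k] a
  have hay : a < y := (hlt a le_rfl).trans_le (hmono.ge_of_tendsto hlim 1)
  have hfixed : T y = y :=
    isFixedPt_of_tendsto_iterate hlim (hT.continuousAt (Ici_mem_nhds hay))
  exact (hlt y hay.le).ne' hfixed

theorem exists_iterate_eq_of_le [DenselyOrdered α] (hT : ContinuousOn T (Ici a))
    (hlt : ∀ z ≥ a, z < T z) {h : α} (hh : a ≤ h) : ∃ x ∈ Icc a (T a), ∃ k, T^[k] x = h := by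
  obtain ⟨k, hk, hk'⟩ : ∃ k, ¬h < T^[k] a ∧ h < T^[k + 1] a :=
    Nat.exists_not_and_succ_of_not_zero_of_exists hh.not_gt (exists_lt_iterate hT hlt h)
  have hcont : ContinuousOn T^[k] (Icc a (T a)) :=
    (hT.iterate (mapsTo_Ici_of_forall_lt hlt) k).mono Icc_subset_Ici_self
  obtain ⟨x, hx, hxh⟩ := intermediate_value_Icc (hlt a le_rfl).le hcont ⟨not_lt.1 hk, hk'.le⟩
  exact ⟨x, hx, k, hxh⟩

theorem bddAbove_image_Ici_of_comp_le [DenselyOrdered α] {β : Type*} [Preorder β] {f : α → β}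
    (hT : ContinuousOn T (Ici a)) (hlt : ∀ z ≥ a, z < T z)
    (hf : BddAbove (f '' Icc a (T a))) (hle : ∀ z ≥ a, f (T z) ≤ f z) :
    BddAbove (f '' Ici a) := by
  obtain ⟨C, hC⟩ := hf
  refine ⟨C, forall_mem_image.2 fun h hh => ?_⟩
  obtain ⟨x, hx, k, rfl⟩ := exists_iterate_eq_of_le hT hlt hh
  have hanti : f (T^[k] x) ≤ f x := by
    induction k with
    | zero => rfl
    | succ k ih =>
      have hk : a ≤ T^[k] x := (mapsTo_Ici_of_forall_lt hlt).iterate k hx.1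
      rw [iterate_succ_apply']
      exact (hle _ hk).trans (ih hk)
  exact hanti.trans (hC (mem_image_of_mem f hx))

end Orbits

section StolzCesaro

variable {F T : ℝ → ℝ} {a : ℝ}

theorem exists_eventually_le_mul_add (hF : ContinuousOn F (Ici a)) (hT : ContinuousOn T (Ici a))
    (hlt : ∀ z ≥ a, z < T z) {m : ℝ}
    (hm : ∀ᶠ z in atTop, F (T z) - F z ≤ m * (T z - z)) :
    ∃ C, ∀ᶠ z in atTop, F z ≤ m * z + C := by
  obtain ⟨b, hb⟩ := eventually_atTop.1 (hm.and (eventually_ge_atTop a))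
  have hab : Ici b ⊆ Ici a := Ici_subset_Ici.2 (hb b le_rfl).2
  have hcont : ContinuousOn (fun z => F z - m * z) (Ici b) :=
    (hF.mono hab).sub (by fun_prop)
  obtain ⟨C, hC⟩ := bddAbove_image_Ici_of_comp_le (f := fun z => F z - m * z) (hT.mono hab)
    (fun z hz => hlt z (hab hz))
    (isCompact_Icc.bddAbove_image (hcont.mono Icc_subset_Ici_self))
    (fun z hz => by linarith [(hb z hz).1])
  refine ⟨C, (eventually_ge_atTop b).mono fun z hz => ?_⟩
  linarith [hC (mem_image_of_mem _ hz)]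

theorem eventually_div_lt_of_eventually_shift_quotient_lt (hF : ContinuousOn F (Ici a))
    (hT : ContinuousOn T (Ici a)) (hlt : ∀ z ≥ a, z < T z) {m M : ℝ} (hmM : m < M)
    (hm : ∀ᶠ z in atTop, (F (T z) - F z) / (T z - z) < m) :
    ∀ᶠ z in atTop, F z / z < M := by
  have hstep : ∀ᶠ z in atTop, F (T z) - F z ≤ m * (T z - z) := by
    filter_upwards [hm, eventually_ge_atTop a] with z hz haz
    exact ((div_lt_iff₀ (sub_pos.2 (hlt z haz))).1 hz).le
  obtain ⟨C, hC⟩ := exists_eventually_le_mul_add hF hT hlt hstep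
  have hlim : Tendsto (fun z : ℝ => m + C / z) atTop (𝓝 m) := by
    simpa using (tendsto_const_nhds (x := C)).div_atTop tendsto_id |>.const_add m
  filter_upwards [hC, hlim.eventually_lt_const hmM, eventually_gt_atTop 0] with z hz hzM hz0
  calc F z / z ≤ (m * z + C) / z := by gcongr
    _ = m + C / z := by field_simp
    _ < M := hzM

theorem tendsto_div_of_tendsto_shift_quotient (hF : ContinuousOn F (Ici a))
    (hT : ContinuousOn T (Ici a)) (hlt : ∀ z ≥ a, z < T z) {L : ℝ}
    (hL : Tendsto (fun z => (F (T z) - F z) / (T z - z)) atTop (𝓝 L)) :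
    Tendsto (fun z => F z / z) atTop (𝓝 L) := by
  refine tendsto_order.2 ⟨fun M hM => ?_, fun M hM => ?_⟩
  · obtain ⟨m, hMm, hmL⟩ := exists_between hM
    have hneg : ∀ᶠ z in atTop, ((-F) (T z) - (-F) z) / (T z - z) < -m := by
      filter_upwards [hL.eventually_const_lt hmL] with z hz
      have hquot : ((-F) (T z) - (-F) z) / (T z - z) = -((F (T z) - F z) / (T z - z)) := by
        simp only [Pi.neg_apply]; ring
      rw [hquot]
      exact neg_lt_neg hz
    filter_upwards [eventually_div_lt_of_eventually_shift_quotient_lt hF.neg hT hlt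
      (neg_lt_neg hMm) hneg] with z hz
    rwa [Pi.neg_apply, neg_div, neg_lt_neg_iff] at hz
  · obtain ⟨m, hLm, hmM⟩ := exists_between hM
    exact eventually_div_lt_of_eventually_shift_quotient_lt hF hT hlt hmM
      (hL.eventually_lt_const hLm)

end StolzCesaro

section Parabola

variable {r : ℝ → ℝ} {a c : ℝ}

theorem tendsto_atTop_of_eventually_le_self_shift_sub (hr_cont : ContinuousOn r (Ici a))
    (hr_pos : ∀ z ≥ a, 0 < r z) {δ : ℝ} (hδ : 0 < δ)
    (hrec : ∀ᶠ z in atTop, δ ≤ r (z + r z) - r z) : Tendsto r atTop atTop := by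
  have hstep : ∀ᶠ z in atTop,
      -r (z + r z) ^ 2 - -r z ^ 2 ≤ -(2 * δ) * (z + r z - z) := by
    filter_upwards [hrec, eventually_ge_atTop a] with z hz haz
    have hrz := hr_pos z haz
    have hsq : (r z + δ) ^ 2 ≤ r (z + r z) ^ 2 := by gcongr; linarith
    linarith [sq_nonneg δ]
  obtain ⟨C, hC⟩ := exists_eventually_le_mul_add (hr_cont.pow 2).neg
    (continuousOn_id.add hr_cont) (fun z hz => lt_add_of_pos_right z (hr_pos z hz)) hstep
  have hlin : Tendsto (fun z => 2 * δ * z - C) atTop atTop :=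
    tendsto_atTop_add_const_right _ _ (tendsto_id.const_mul_atTop (by positivity))
  have hsq : Tendsto (fun z => r z ^ 2) atTop atTop :=
    tendsto_atTop_mono' _ (hC.mono fun z (hz : -r z ^ 2 ≤ -(2 * δ) * z + C) => by linarith) hlin
  refine (Real.tendsto_sqrt_atTop.comp hsq).congr' ?_
  filter_upwards [eventually_ge_atTop a] with z hz
  exact Real.sqrt_sq (hr_pos z hz).le

theorem tendsto_sq_self_shift_quotient (hr : Tendsto r atTop atTop)
    (hrec : Tendsto (fun z => r (z + r z) - r z) atTop (𝓝 c)) :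
    Tendsto (fun z => (r (z + r z) ^ 2 - r z ^ 2) / (z + r z - z)) atTop (𝓝 (2 * c)) := by
  have hlim := hrec.mul ((hrec.div_atTop hr).add_const 2)
  rw [zero_add, mul_comm c] at hlim
  refine hlim.congr' ?_
  filter_upwards [hr.eventually_gt_atTop 0] with z hz
  rw [add_sub_cancel_left]
  field_simp
  ring

theorem tendsto_sq_div_of_tendsto_self_shift_sub (hc : 0 < c) (hr_cont : ContinuousOn r (Ici a))
    (hr_pos : ∀ z ≥ a, 0 < r z)
    (hrec : Tendsto (fun z => r (z + r z) - r z) atTop (𝓝 c)) :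
    Tendsto (fun h => r h ^ 2 / h) atTop (𝓝 (2 * c)) := by
  have hr_atTop : Tendsto r atTop atTop :=
    tendsto_atTop_of_eventually_le_self_shift_sub hr_cont hr_pos (half_pos hc)
      (hrec.eventually_const_le (half_lt_self hc))
  exact tendsto_div_of_tendsto_shift_quotient (hr_cont.pow 2) (continuousOn_id.add hr_cont)
    (fun z hz => lt_add_of_pos_right z (hr_pos z hz))
    (tendsto_sq_self_shift_quotient hr_atTop hrec)

theorem discrete_parabola_iteration_general (hc : 0 < c) (hr_cont : ContinuousOn r (Ici a))
    (hr_pos : ∀ z ≥ a, 0 < r z)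
    (hrec : Tendsto (fun z => r (z + r z) - r z) atTop (𝓝 c)) :
    Tendsto (fun h => r h / √(2 * c * h)) atTop (𝓝 1) := by
  have hsq : Tendsto (fun h => r h ^ 2 / h / (2 * c)) atTop (𝓝 1) := by
    simpa [hc.ne'] using
      (tendsto_sq_div_of_tendsto_self_shift_sub hc hr_cont hr_pos hrec).div_const (2 * c)
  have hsqrt := hsq.sqrt
  rw [Real.sqrt_one] at hsqrt
  refine hsqrt.congr' ?_
  filter_upwards [eventually_ge_atTop a] with h hh
  rw [div_div, mul_comm h, Real.sqrt_div (sq_nonneg _), Real.sqrt_sq (hr_pos h hh).le]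

end Parabola

/-- Discrete parabola iteration: if `r` is continuous and positive on `[1, ∞)` and
moving up by one neck radius increases the radius by `1` up to an error `ε(z)`
which is bounded and tends to `0` as `z → ∞`, then `r(h) = √(2h) + o(√h)`, i.e.
`r(h)/√(2h) → 1` as `h → ∞`. -/
theorem discrete_parabola_iteration
    (r ε : ℝ → ℝ)
    (hr_cont : ContinuousOn r (Set.Ici 1))
    (hr_pos : ∀ z ≥ (1 : ℝ), 0 < r z)
    (hε_bdd : ∃ M : ℝ, ∀ z ≥ (1 : ℝ), |ε z| ≤ M)
    (hε_lim : Tendsto ε atTop (nhds 0))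
    (hrec : ∀ z ≥ (1 : ℝ), |r (z + r z) - r z - 1| ≤ ε z) :
    Tendsto (fun h => r h / Real.sqrt (2 * h)) atTop (nhds 1) := by
  simpa using discrete_parabola_iteration_general one_pos hr_cont hr_pos <|
    tendsto_sub_nhds_zero_iff.1 (squeeze_zero_norm' ((eventually_ge_atTop 1).mono hrec) hε_lim)
end
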